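/- Let K be a function field over F_q, v a normalised discrete valuation of K with completion K_v, and Γ a finite-index subgroup of PGL₂(R_v) where R_v is the affine function ring of v. For every quadratic irrational α ∈ K_v over K, there exists m_α ∈ N such that for every integer m ≥ m_α, the value q_v^{−m} belongs to the quadratic Lagrange spectrum Sp(α, Γ); that is, Sp(α, Γ) contains a Hall ray. -/

import Mathlib

open Filter

/-- The projective (homography) action of a matrix `g ∈ GL₂(K)` on the completion `L` of `K`
(via the embedding `ι : K →+* L`): `g·x = (a x + b)/(c x + d)`. -/
noncomputable def homog {K L : Type*} [Field K] [Field L] (ι : K →+* L)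
    (g : GL (Fin 2) K) (x : L) : L :=
  (ι ((g : Matrix (Fin 2) (Fin 2) K) 0 0) * x + ι ((g : Matrix (Fin 2) (Fin 2) K) 0 1)) /
    (ι ((g : Matrix (Fin 2) (Fin 2) K) 1 0) * x + ι ((g : Matrix (Fin 2) (Fin 2) K) 1 1))

/-- The set of pairs `(β, β^σ)` with `β ∈ Θ_{α,Γ} = Γ·{α, α^σ}` and `β^σ` the corresponding
Galois conjugate, for the projective action of `Γ ≤ GL₂(K)` on the completion. -/
noncomputable def thetaPairsG {K L : Type*} [Field K] [Field L] (ι : K →+* L)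
    (Γ : Subgroup (GL (Fin 2) K)) (α ασ : L) : Set (L × L) :=
  {pr | ∃ g ∈ Γ, pr = (homog ι g α, homog ι g ασ) ∨ pr = (homog ι g ασ, homog ι g α)}

/-- The approximation constant
`c_{α,Γ}(x) = liminf_{β ∈ Θ_{α,Γ}, |β−β^σ|_v → 0} |x−β|_v/|β−β^σ|_v`. -/
noncomputable def capproxG {L : Type*} [Field L] (A : L → ℝ) (Θp : Set (L × L)) (x : L) : ℝ :=
  Filter.liminf (fun pr : L × L => A (x - pr.1) / A (pr.1 - pr.2))
    (Filter.principal Θp ⊓ Filter.comap (fun pr : L × L => A (pr.1 - pr.2)) (nhds 0))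

/-- The quadratic Lagrange spectrum `Sp(α, Γ) = {c_{α,Γ}(x) : x ∈ K_v − (K ∪ Θ_{α,Γ})}`. -/
noncomputable def quadSpectrumG {K L : Type*} [Field K] [Field L] (ι : K →+* L)
    (A : L → ℝ) (Θp : Set (L × L)) : Set ℝ :=
  {c | ∃ x : L, (∀ y : K, ι y ≠ x) ∧ (∀ pr ∈ Θp, pr.1 ≠ x) ∧ c = capproxG A Θp x}


section core
variable {L : Type*} [Field L] (A : AbsoluteValue L ℝ)

lemma na_sub (hna : ∀ x y : L, A (x + y) ≤ max (A x) (A y)) (x y : L) :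
    A (x - y) ≤ max (A x) (A y) := by
  have := hna x (-y)
  rwa [A.map_neg, ← sub_eq_add_neg] at this

lemma na_add_r (hna : ∀ x y : L, A (x + y) ≤ max (A x) (A y)) {x y : L} (h : A x < A y) :
    A (x + y) = A y := by
  apply le_antisymm
  · exact (hna x y).trans (max_le h.le le_rfl)
  · have h1 := na_sub A hna (x + y) x
    rw [add_sub_cancel_left] at h1
    rcases le_max_iff.1 h1 with h2 | h2
    · exact h2
    · exact absurd h2 (not_le.2 h)

lemma na_add_l (hna : ∀ x y : L, A (x + y) ≤ max (A x) (A y)) {x y : L} (h : A y < A x) :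
    A (x + y) = A x := by
  rw [add_comm]; exact na_add_r A hna h

lemma na_sub_r (hna : ∀ x y : L, A (x + y) ≤ max (A x) (A y)) {x y : L} (h : A x < A y) :
    A (x - y) = A y := by
  rw [sub_eq_add_neg, na_add_r A hna (by rwa [A.map_neg]), A.map_neg]

lemma na_sub_l (hna : ∀ x y : L, A (x + y) ≤ max (A x) (A y)) {x y : L} (h : A y < A x) :
    A (x - y) = A x := by
  rw [sub_eq_add_neg, na_add_l A hna (by rwa [A.map_neg])]

/-- if `x` is at distance `< A y` from `y` then the same size -/
lemma na_eq_of_sub (hna : ∀ x y : L, A (x + y) ≤ max (A x) (A y)) {x y : L}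
    (h : A (x - y) < A y) : A x = A y := by
  have := na_add_r A hna h
  rwa [sub_add_cancel] at this

lemma fixed_point (hna : ∀ x y : L, A (x + y) ≤ max (A x) (A y))
    (hcomplete : ∀ u : ℕ → L,
      (∀ ε : ℝ, 0 < ε → ∃ N : ℕ, ∀ m n : ℕ, N ≤ m → N ≤ n → A (u m - u n) < ε) →
      ∃ x : L, ∀ ε : ℝ, 0 < ε → ∃ N : ℕ, ∀ n : ℕ, N ≤ n → A (u n - x) < ε)
    (h : L → L) (T κ : ℝ) (hT : 0 < T) (hκ0 : 0 < κ) (hκ1 : κ < 1)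
    (t : L) (ht : A t = T)
    (hmap : ∀ z, A z = T → A (h z) = T)
    (hcon : ∀ z w, A z = T → A w = T → A (h z - h w) = κ * A (z - w)) :
    ∃ x, A x = T ∧ h x = x := by
  have hit : ∀ n z, A z = T → A (h^[n] z) = T := by
    intro n
    induction n with
    | zero => intro z hz; simpa using hz
    | succ n ih => intro z hz; rw [Function.iterate_succ_apply]; exact ih _ (hmap z hz)
  have hitc : ∀ n z w, A z = T → A w = T → A (h^[n] z - h^[n] w) = κ ^ n * A (z - w) := by
    intro n
    induction n with
    | zero => intro z w hz hw; simp
    | succ n ih =>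
      intro z w hz hw
      rw [Function.iterate_succ_apply, Function.iterate_succ_apply, ih _ _ (hmap z hz) (hmap w hw),
        hcon z w hz hw]; ring
  have hsm : ∀ ε : ℝ, 0 < ε → ∃ N : ℕ, κ ^ N * T < ε := by
    intro ε hε
    obtain ⟨N, hN⟩ := exists_pow_lt_of_lt_one (div_pos hε hT) hκ1
    exact ⟨N, by rwa [lt_div_iff₀ hT] at hN⟩
  obtain ⟨x, hx⟩ := hcomplete (fun n => h^[n] t) (by
    intro ε hε
    obtain ⟨N, hN⟩ := hsm ε hε
    refine ⟨N, fun m n hm hn => lt_of_le_of_lt ?_ hN⟩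
    obtain ⟨m', rfl⟩ := Nat.exists_eq_add_of_le hm
    obtain ⟨n', rfl⟩ := Nat.exists_eq_add_of_le hn
    simp only [Function.iterate_add_apply]
    rw [hitc N _ _ (hit m' t ht) (hit n' t ht)]
    apply mul_le_mul_of_nonneg_left _ (by positivity)
    have := na_sub A hna (h^[m'] t) (h^[n'] t)
    rwa [hit m' t ht, hit n' t ht, max_self] at this)
  have hxT : A x = T := by
    obtain ⟨N, hN⟩ := hx T hT
    have h1 := hN N le_rfl
    have h2 := hit N t ht
    rw [← h2, A.map_sub] at h1
    rw [na_eq_of_sub A hna h1, h2]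
  refine ⟨x, hxT, ?_⟩
  by_contra hne
  have hpos : 0 < A (h x - x) := A.pos (sub_ne_zero.2 hne)
  obtain ⟨N, hN⟩ := hx _ hpos
  have h1 := hN N le_rfl
  have h2 := hN (N+1) (Nat.le_succ N)
  simp only [Function.iterate_succ_apply'] at h2
  have h3 := hna (h x - h (h^[N] t)) (h (h^[N] t) - x)
  rw [sub_add_sub_cancel, hcon _ _ hxT (hit N t ht), A.map_sub x] at h3
  have h4 : κ * A (h^[N] t - x) < A (h x - x) := by
    nlinarith [A.nonneg (h^[N] t - x)]
  exact absurd h3 (not_le.2 (max_lt h4 h2))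

theorem core_lemma (hna : ∀ x y : L, A (x + y) ≤ max (A x) (A y))
    (hcomplete : ∀ u : ℕ → L,
      (∀ ε : ℝ, 0 < ε → ∃ N : ℕ, ∀ m n : ℕ, N ≤ m → N ≤ n → A (u m - u n) < ε) →
      ∃ x : L, ∀ ε : ℝ, 0 < ε → ∃ N : ℕ, ∀ n : ℕ, N ≤ n → A (u n - x) < ε)
    (Θ : L → L → Prop) (C M : ℝ) (hM : 1 < M) (hC : 0 < C)
    (hsw : ∀ b b', Θ b b' → Θ b' b)
    (h0 : ∀ b b', Θ b b' → b ≠ 0)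
    (hd : ∀ b b', Θ b b' → b ≠ b')
    (hc1 : ∀ b b', Θ b b' → A (b - b') ≤ C)
    (hc2 : ∀ b b', Θ b b' → A (b⁻¹ - b'⁻¹) ≤ C)
    (hr : ∀ b b', Θ b b' → A b' ≤ M * A b)
    (b0 b0' : L) (hb0 : Θ b0 b0') (hb0e : A b0' = M * A b0)
    (t s : L) (ht : C < A t) (hs : C < A s) (hts : 1 < A t * A s)
    (htb : A b0' < A t) (hsb : (A s)⁻¹ < A b0)
    (hadd : ∀ b b', Θ b b' → Θ (b + t) (b' + t))
    (hsub : ∀ b b', Θ b b' → Θ (b - t) (b' - t))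
    (hiadd : ∀ b b', Θ b b' → Θ (b⁻¹ + s)⁻¹ (b'⁻¹ + s)⁻¹)
    (hisub : ∀ b b', Θ b b' → Θ (b⁻¹ - s)⁻¹ (b'⁻¹ - s)⁻¹) :
    ∃ x : L, (∀ b b', Θ b b' → A (b - b') ≤ M * A (x - b)) ∧
      ∀ ε : ℝ, 0 < ε → ∃ b b', Θ b b' ∧ A (b - b') < ε ∧ A (b - b') = M * A (x - b) := by
  have htp : 0 < A t := hC.trans ht
  have hsp : 0 < A s := hC.trans hs
  have hst : (A t)⁻¹ < A s := by rw [inv_lt_iff_one_lt_mul₀ htp]; linarith [mul_comm (A t) (A s)]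
  have hst' : (A s)⁻¹ < A t := by rw [inv_lt_iff_one_lt_mul₀ hsp]; linarith
  set h : L → L := fun z => t + (z⁻¹ + s)⁻¹ with hh
  set κ : ℝ := ((A t * A s)⁻¹) ^ 2 with hκ
  have hκ0 : 0 < κ := by positivity
  have hκ1 : κ < 1 := by
    apply pow_lt_one₀ (by positivity) (inv_lt_one_of_one_lt₀ hts) (by norm_num)
  have hzs : ∀ z, A z = A t → A (z⁻¹ + s) = A s := by
    intro z hz
    apply na_add_r A hna
    rw [map_inv₀, hz]; exact hst
  have hmap : ∀ z, A z = A t → A (h z) = A t := by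
    intro z hz
    apply na_add_l A hna
    rw [map_inv₀, hzs z hz]; exact hst'
  have hcon : ∀ z w, A z = A t → A w = A t → A (h z - h w) = κ * A (z - w) := by
    intro z w hz hw
    have z0 : z ≠ 0 := A.pos_iff.1 (hz ▸ htp)
    have w0 : w ≠ 0 := A.pos_iff.1 (hw ▸ htp)
    have z1 : z⁻¹ + s ≠ 0 := A.pos_iff.1 (hzs z hz ▸ hsp)
    have w1 : w⁻¹ + s ≠ 0 := A.pos_iff.1 (hzs w hw ▸ hsp)
    have e : h z - h w = (z - w) * (z⁻¹ * w⁻¹ * (z⁻¹ + s)⁻¹ * (w⁻¹ + s)⁻¹) := by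
      have e1 : z - w = z * w * (w⁻¹ - z⁻¹) := by field_simp
      have e2 : h z - h w = (w⁻¹ - z⁻¹) * ((z⁻¹ + s)⁻¹ * (w⁻¹ + s)⁻¹) := by
        have := inv_sub_inv z1 w1
        simp only [hh, add_sub_add_left_eq_sub]
        rw [this, div_eq_mul_inv, mul_inv]; ring
      rw [e2, e1]; field_simp
    rw [e]
    simp only [map_mul, map_inv₀, hzs z hz, hzs w hw, hz, hw, hκ]
    rw [mul_inv]; ring
  obtain ⟨x, hxt, hx⟩ := fixed_point A hna hcomplete h (A t) κ htp hκ0 hκ1 t rfl hmap hcon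
  have hx0 : x ≠ 0 := A.pos_iff.1 (hxt ▸ htp)
  set y := x - t with hy
  have hyx : y = (x⁻¹ + s)⁻¹ := by
    rw [hy]; nth_rewrite 1 [← hx]; simp [hh]
  have hyA : A y = (A s)⁻¹ := by rw [hyx, map_inv₀, hzs x hxt]
  have hyx' : y⁻¹ = x⁻¹ + s := by rw [hyx, inv_inv]
  have hy0 : y ≠ 0 := A.pos_iff.1 (by rw [hyA]; positivity)
  have hΘh : ∀ b b', Θ b b' → Θ (h b) (h b') := by
    intro b b' hb
    have := hadd _ _ (hiadd _ _ hb)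
    simpa only [hh, add_comm] using this
  -- Claim A
  have claimA : ∀ n : ℕ, ∀ b b', Θ b b' → A b = A t → A b' = A t → C * κ ^ n < A (b - b') →
      A (x - b') ≤ M * A (x - b) := by
    intro n
    induction n with
    | zero =>
      intro b b' hb _ _ hn
      simp only [pow_zero, mul_one] at hn
      exact absurd (hc1 _ _ hb) (not_le.2 hn)
    | succ n ih =>
      intro β β' hβ hβt hβt' hn
      obtain ⟨b, rfl⟩ : ∃ b, β = b + t := ⟨β - t, by ring⟩
      obtain ⟨b', rfl⟩ : ∃ b', β' = b' + t := ⟨β' - t, by ring⟩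
      have hb : Θ b b' := by simpa using hsub _ _ hβ
      have e1 : x - (b + t) = y - b := by rw [hy]; ring
      have e2 : x - (b' + t) = y - b' := by rw [hy]; ring
      rw [e1, e2]
      by_cases hcase : (A s)⁻¹ < A b ∧ (A s)⁻¹ < A b'
      · have j1 : A (y - b) = A b := na_sub_r A hna (by rw [hyA]; exact hcase.1)
        have j2 : A (y - b') = A b' := na_sub_r A hna (by rw [hyA]; exact hcase.2)
        rw [j1, j2]
        exact hr _ _ hb
      have b0 := h0 _ _ hb
      have b0' := h0 _ _ (hsw _ _ hb)
      have hbp := A.pos b0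
      have hbp' := A.pos b0'
      have heq : A b = A b' ∧ A b ≤ (A s)⁻¹ := by
        rw [not_and_or, not_lt, not_lt] at hcase
        rcases hcase with hc | hc
        · have : A b' ⁻¹ = A b⁻¹ := by
            apply na_eq_of_sub A hna
            refine lt_of_le_of_lt (hc2 _ _ (hsw _ _ hb)) (lt_of_lt_of_le hs ?_)
            rw [map_inv₀]; exact (le_inv_comm₀ hbp hsp).1 hc
          rw [map_inv₀, map_inv₀, inv_inj] at this
          exact ⟨this.symm, hc⟩
        · have : A b⁻¹ = A b'⁻¹ := by
            apply na_eq_of_sub A hna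
            refine lt_of_le_of_lt (hc2 _ _ hb) (lt_of_lt_of_le hs ?_)
            rw [map_inv₀]; exact (le_inv_comm₀ hbp' hsp).1 hc
          rw [map_inv₀, map_inv₀, inv_inj] at this
          exact ⟨this, this ▸ hc⟩
      obtain ⟨hbb, hble⟩ := heq
      rcases hble.lt_or_eq with hlt | hbs
      · have j1 : A (y - b) = A y := na_sub_l A hna (by rwa [hyA])
        have j2 : A (y - b') = A y := na_sub_l A hna (by rwa [hyA, ← hbb])
        rw [j1, j2]
        nlinarith [A.nonneg y]
      -- equality case
      set c := (b⁻¹ - s)⁻¹ with hc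
      set c' := (b'⁻¹ - s)⁻¹ with hc'
      have hcΘ : Θ c c' := hisub _ _ hb
      have c0 := h0 _ _ hcΘ
      have c0' := h0 _ _ (hsw _ _ hcΘ)
      have hcp := A.pos c0
      have hcp' := A.pos c0'
      have ec : b⁻¹ = c⁻¹ + s := by rw [hc, inv_inv]; ring
      have ec' : b'⁻¹ = c'⁻¹ + s := by rw [hc', inv_inv]; ring
      have e3 : y - b = y * b * (c⁻¹ - x⁻¹) := by
        have : c⁻¹ - x⁻¹ = b⁻¹ - y⁻¹ := by rw [ec, hyx']; ring
        rw [this]; field_simp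
      have e4 : y - b' = y * b' * (c'⁻¹ - x⁻¹) := by
        have : c'⁻¹ - x⁻¹ = b'⁻¹ - y⁻¹ := by rw [ec', hyx']; ring
        rw [this]; field_simp
      suffices hsuf : A (c'⁻¹ - x⁻¹) ≤ M * A (c⁻¹ - x⁻¹) by
        rw [e3, e4, map_mul, map_mul, map_mul, map_mul, ← hbb]
        have : 0 ≤ A y * A b := by positivity
        nlinarith
      have hxi : A x⁻¹ = (A t)⁻¹ := by rw [map_inv₀, hxt]
      by_cases hcase2 : A c < A t ∧ A c' < A t
      · have i1 : (A t)⁻¹ < (A c)⁻¹ := inv_strictAnti₀ hcp hcase2.1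
        have i2 : (A t)⁻¹ < (A c')⁻¹ := inv_strictAnti₀ hcp' hcase2.2
        have j1 : A (c⁻¹ - x⁻¹) = (A c)⁻¹ := by
          rw [na_sub_l A hna (by rw [hxi, map_inv₀ A c]; exact i1), map_inv₀ A c]
        have j2 : A (c'⁻¹ - x⁻¹) = (A c')⁻¹ := by
          rw [na_sub_l A hna (by rw [hxi, map_inv₀ A c']; exact i2), map_inv₀ A c']
        rw [j1, j2]
        have := hr _ _ (hsw _ _ hcΘ)
        rw [← div_eq_mul_inv, inv_eq_one_div, div_le_div_iff₀ hcp' hcp]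
        linarith
      have heq2 : A c = A c' ∧ A t ≤ A c := by
        rw [not_and_or, not_lt, not_lt] at hcase2
        rcases hcase2 with hcc | hcc
        · have : A c' = A c := na_eq_of_sub A hna
            (lt_of_le_of_lt (hc1 _ _ (hsw _ _ hcΘ)) (lt_of_lt_of_le ht hcc))
          exact ⟨this.symm, hcc⟩
        · have : A c = A c' := na_eq_of_sub A hna
            (lt_of_le_of_lt (hc1 _ _ hcΘ) (lt_of_lt_of_le ht hcc))
          exact ⟨this, this ▸ hcc⟩
      obtain ⟨hcc, hct⟩ := heq2
      rcases hct.lt_or_eq with hlt | hct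
      · have i1 : (A c)⁻¹ < (A t)⁻¹ := inv_strictAnti₀ htp hlt
        have j1 : A (c⁻¹ - x⁻¹) = A x⁻¹ :=
          na_sub_r A hna (by rw [hxi, map_inv₀ A c]; exact i1)
        have j2 : A (c'⁻¹ - x⁻¹) = A x⁻¹ :=
          na_sub_r A hna (by rw [hxi, map_inv₀ A c', ← hcc]; exact i1)
        rw [j1, j2]
        nlinarith [A.nonneg x⁻¹]
      have ih' := ih c c' hcΘ hct.symm (by rw [← hcc, hct]) (by
        have k1 : h c = b + t := by
          simp only [hh]; rw [← ec, inv_inv]; ring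
        have k2 : h c' = b' + t := by
          simp only [hh]; rw [← ec', inv_inv]; ring
        rw [← k1, ← k2, hcon c c' hct.symm (by rw [← hcc, hct]), pow_succ] at hn
        have : κ * (C * κ ^ n) < κ * A (c - c') := by linarith [hn]
        exact lt_of_mul_lt_mul_left this hκ0.le)
      have e5 : c⁻¹ - x⁻¹ = (x - c) * (c⁻¹ * x⁻¹) := by field_simp
      have e6 : c'⁻¹ - x⁻¹ = (x - c') * (c'⁻¹ * x⁻¹) := by field_simp
      rw [e5, e6, map_mul, map_mul, map_mul, map_mul, map_inv₀ A c, map_inv₀ A c', ← hcc, ← mul_assoc M]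
      have nn : 0 ≤ (A c)⁻¹ * A x⁻¹ := mul_nonneg (inv_nonneg.2 hcp.le) (A.nonneg _)
      exact mul_le_mul_of_nonneg_right ih' nn
  refine ⟨x, ?_, ?_⟩
  · intro b b' hb
    by_contra hlt
    push Not at hlt
    have hpos : 0 < A (b - b') := A.pos (sub_ne_zero.2 (hd _ _ hb))
    have h1 : A (x - b) < A (b - b') := by nlinarith [A.nonneg (x - b)]
    have h2 := hc1 _ _ hb
    have h3 : A b = A t := by
      rw [← hxt]; apply na_eq_of_sub A hna; rw [A.map_sub, hxt]; linarith
    have h4 : A b' = A t := by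
      rw [← h3]; apply na_eq_of_sub A hna; rw [A.map_sub, h3]; linarith
    have h5 : A (x - b') = A (b - b') := by
      rw [← na_add_r A hna h1, sub_add_sub_cancel]
    obtain ⟨n, hn⟩ := exists_pow_lt_of_lt_one (div_pos hpos hC) hκ1
    rw [lt_div_iff₀ hC] at hn
    have := claimA n b b' hb h3 h4 (by linarith)
    linarith
  · have hseq : ∀ n : ℕ, ∃ b b', Θ b b' ∧ A b = A t ∧ A b' = A t ∧ A (b - b') = κ ^ n * A b0' ∧
        A (b - b') = M * A (x - b) := by
      intro n
      have hb0p : 0 < A b0 := A.pos (h0 _ _ hb0)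
      have hlt : A b0 < A b0' := by nlinarith
      induction n with
      | zero =>
        refine ⟨b0 + t, b0' + t, hadd _ _ hb0, na_add_r A hna (hlt.trans htb), na_add_r A hna htb, ?_, ?_⟩
        · rw [add_sub_add_right_eq_sub, na_sub_r A hna hlt]; simp
        · rw [add_sub_add_right_eq_sub, na_sub_r A hna hlt, hb0e]
          have : x - (b0 + t) = y - b0 := by rw [hy]; ring
          rw [this, na_sub_r A hna (by rwa [hyA])]
      | succ n ih =>
        obtain ⟨b, b', k1, k2, k3, k4, k5⟩ := ih
        refine ⟨h b, h b', hΘh _ _ k1, hmap _ k2, hmap _ k3, ?_, ?_⟩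
        · rw [hcon _ _ k2 k3, k4]; ring
        · have j : A (x - h b) = A (h x - h b) := by rw [hx]
          rw [j, hcon _ _ k2 k3, hcon _ _ hxt k2, k5]; ring
    intro ε hε
    have hb0p' : 0 < A b0' := A.pos (h0 _ _ (hsw _ _ hb0))
    obtain ⟨n, hn⟩ := exists_pow_lt_of_lt_one (div_pos hε hb0p') hκ1
    rw [lt_div_iff₀ hb0p'] at hn
    obtain ⟨b, b', k1, k2, k3, k4, k5⟩ := hseq n
    exact ⟨b, b', k1, by rw [k4]; exact hn, k5⟩

end core

section lattice
variable {L : Type*} [Field L] (A : AbsoluteValue L ℝ)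

lemma lat_cover (hna : ∀ x y : L, A (x + y) ≤ max (A x) (A y)) (Q : ℝ) (hQ : 1 < Q)
    (hval : ∀ x : L, x ≠ 0 → ∃ n : ℤ, A x = Q ^ n)
    (hsurj : ∀ n : ℤ, ∃ x : L, x ≠ 0 ∧ A x = Q ^ n)
    (hres : ∃ s : Finset L, ∀ x : L, A x ≤ 1 → ∃ y ∈ s, A (x - y) < 1) (n : ℕ) :
    ∃ T : Finset L, ∀ x, A x ≤ Q ^ n → ∃ y ∈ T, A (x - y) ≤ 1 := by
  classical
  have hQ0 : 0 < Q := by linarith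
  induction n with
  | zero => exact ⟨{0}, fun x hx => ⟨0, by simp, by simpa using hx⟩⟩
  | succ n ih =>
    obtain ⟨T, hT⟩ := ih
    obtain ⟨s, hs⟩ := hres
    obtain ⟨l, hl0, hl⟩ := hsurj ((n + 1 : ℕ) : ℤ)
    rw [zpow_natCast] at hl
    refine ⟨(s ×ˢ T).image (fun p => l * p.1 + p.2), fun x hx => ?_⟩
    have hlp : 0 < A l := A.pos hl0
    obtain ⟨y, hy, hxy⟩ := hs (x / l) (by rw [map_div₀, div_le_one hlp, hl]; exact hx)
    have h1 : A (x - l * y) < Q ^ (n + 1) := by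
      have : x - l * y = l * (x / l - y) := by field_simp
      rw [this, map_mul, ← hl]; nlinarith
    have h2 : A (x - l * y) ≤ Q ^ n := by
      by_cases h0 : x - l * y = 0
      · rw [h0, map_zero]; positivity
      · obtain ⟨k, hk⟩ := hval _ h0
        rw [hk, ← zpow_natCast] at h1
        rw [hk, ← zpow_natCast]
        have := (zpow_lt_zpow_iff_right₀ hQ).1 h1
        apply (zpow_le_zpow_iff_right₀ hQ).2
        push_cast at this; omega
    obtain ⟨z, hz, hxz⟩ := hT _ h2
    refine ⟨l * y + z, ?_, by rwa [← sub_sub]⟩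
    exact Finset.mem_image.2 ⟨(y, z), Finset.mem_product.2 ⟨hy, hz⟩, rfl⟩

lemma lat_big (hna : ∀ x y : L, A (x + y) ≤ max (A x) (A y)) (Q : ℝ) (hQ : 1 < Q)
    (hsurj : ∀ n : ℤ, ∃ x : L, x ≠ 0 ∧ A x = Q ^ n)
    (R : Subring L) (hR : ∀ x ∈ R, x ≠ 0 → 1 ≤ A x)
    (hdense : ∀ x : L, ∀ ε : ℝ, 0 < ε → ∃ p ∈ R, ∃ q ∈ R, q ≠ 0 ∧ A (x - p / q) < ε) :
    ∃ X ∈ R, 1 < A X := by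
  obtain ⟨x, hx0, hx⟩ := hsurj 1
  rw [zpow_one] at hx
  obtain ⟨p, hp, q, hq, hq0, h⟩ := hdense x Q (by linarith)
  refine ⟨p, hp, ?_⟩
  rw [A.map_sub, ← hx] at h
  have h1 := na_eq_of_sub A hna h
  have hqp := A.pos hq0
  rw [map_div₀, div_eq_iff hqp.ne', hx] at h1
  have := hR q hq hq0
  nlinarith

lemma lat_denom (hna : ∀ x y : L, A (x + y) ≤ max (A x) (A y))
    (R : Subring L)
    (hdense : ∀ x : L, ∀ ε : ℝ, 0 < ε → ∃ p ∈ R, ∃ q ∈ R, q ≠ 0 ∧ A (x - p / q) < ε)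
    (T : Finset L) : ∃ d ∈ R, d ≠ 0 ∧ ∀ y ∈ T, ∃ a ∈ R, A (y - a / d) ≤ 1 := by
  classical
  induction T using Finset.induction_on with
  | empty => exact ⟨1, R.one_mem, one_ne_zero, by simp⟩
  | insert y T hy ih =>
    obtain ⟨d, hd, hd0, h⟩ := ih
    obtain ⟨p, hp, q, hq, hq0, hpq⟩ := hdense y 1 one_pos
    refine ⟨d * q, R.mul_mem hd hq, mul_ne_zero hd0 hq0, ?_⟩
    intro z hz
    rcases Finset.mem_insert.1 hz with rfl | hz
    · refine ⟨d * p, R.mul_mem hd hp, ?_⟩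
      rw [mul_div_mul_left _ _ hd0]; exact hpq.le
    · obtain ⟨a, ha, haz⟩ := h z hz
      refine ⟨a * q, R.mul_mem ha hq, ?_⟩
      rwa [mul_div_mul_right _ _ hq0]

lemma lat_cocompact (hna : ∀ x y : L, A (x + y) ≤ max (A x) (A y)) (Q : ℝ) (hQ : 1 < Q)
    (hval : ∀ x : L, x ≠ 0 → ∃ n : ℤ, A x = Q ^ n)
    (hsurj : ∀ n : ℤ, ∃ x : L, x ≠ 0 ∧ A x = Q ^ n)
    (hres : ∃ s : Finset L, ∀ x : L, A x ≤ 1 → ∃ y ∈ s, A (x - y) < 1)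
    (R : Subring L) (hR : ∀ x ∈ R, x ≠ 0 → 1 ≤ A x)
    (hdense : ∀ x : L, ∀ ε : ℝ, 0 < ε → ∃ p ∈ R, ∃ q ∈ R, q ≠ 0 ∧ A (x - p / q) < ε) :
    ∃ D : ℕ, ∀ z, ∃ r ∈ R, A (z - r) ≤ Q ^ D := by
  obtain ⟨X, hX, hX1⟩ := lat_big A hna Q hQ hsurj R hR hdense
  obtain ⟨n, hn⟩ := pow_unbounded_of_one_lt (A X) hQ
  obtain ⟨T, hT⟩ := lat_cover A hna Q hQ hval hsurj hres n
  obtain ⟨d, hd, hd0, hdT⟩ := lat_denom A hna R hdense T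
  have hX0 : X ≠ 0 := A.pos_iff.1 (by linarith)
  have hdp := A.pos hd0
  have key : ∀ k : ℕ, ∀ y, A y ≤ A X ^ k → ∃ r ∈ R, A (d * y - r) ≤ A d := by
    intro k
    induction k with
    | zero =>
      intro y hy
      refine ⟨0, R.zero_mem, ?_⟩
      rw [sub_zero, map_mul]
      simp only [pow_zero] at hy
      nlinarith
    | succ k ih =>
      intro y hy
      have hXk : 0 < A X ^ k := by positivity
      obtain ⟨t, ht, hyt⟩ := hT (y / X ^ k) (by
        rw [map_div₀, map_pow, div_le_iff₀ hXk]
        rw [pow_succ] at hy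
        nlinarith)
      obtain ⟨a, ha, hta⟩ := hdT t ht
      have h1 : A (y / X ^ k - a / d) ≤ 1 := by
        have := hna (y / X ^ k - t) (t - a / d)
        rw [sub_add_sub_cancel] at this
        exact this.trans (max_le hyt hta)
      obtain ⟨r, hr, hyr⟩ := ih (y - X ^ k * (a / d)) (by
        have : y - X ^ k * (a / d) = X ^ k * (y / X ^ k - a / d) := by field_simp
        rw [this, map_mul, map_pow]; nlinarith)
      refine ⟨r + X ^ k * a, R.add_mem hr (R.mul_mem (R.pow_mem hX k) ha), ?_⟩
      have : d * y - (r + X ^ k * a) = d * (y - X ^ k * (a / d)) - r := by field_simp; ring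
      rw [this]; exact hyr
  obtain ⟨D, hD⟩ := pow_unbounded_of_one_lt (A d) hQ
  refine ⟨D, fun z => ?_⟩
  obtain ⟨k, hk⟩ := pow_unbounded_of_one_lt (A (z / d)) hX1
  obtain ⟨r, hr, h⟩ := key k (z / d) hk.le
  refine ⟨r, hr, ?_⟩
  rw [mul_div_cancel₀ _ hd0] at h
  exact h.trans hD.le

lemma lat_sep (T : Finset L) : ∃ F ⊆ T, (∀ x ∈ F, ∀ y ∈ F, x ≠ y → 1 < A (x - y)) ∧
    ∀ x ∈ T, ∃ y ∈ F, A (x - y) ≤ 1 := by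
  classical
  induction T using Finset.induction_on with
  | empty => exact ⟨∅, by simp, by simp, by simp⟩
  | insert a T ha ih =>
    obtain ⟨F, hF, h1, h2⟩ := ih
    by_cases h : ∃ y ∈ F, A (a - y) ≤ 1
    · refine ⟨F, hF.trans (Finset.subset_insert _ _), h1, ?_⟩
      intro x hx
      rcases Finset.mem_insert.1 hx with rfl | hx
      · exact h
      · exact h2 x hx
    · push Not at h
      refine ⟨insert a F, Finset.insert_subset_insert _ hF, ?_, ?_⟩
      · intro x hx y hy hxy
        rcases Finset.mem_insert.1 hx with rfl | hx2
        · rcases Finset.mem_insert.1 hy with rfl | hy2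
          · exact absurd rfl hxy
          · exact h y hy2
        · rcases Finset.mem_insert.1 hy with rfl | hy2
          · rw [A.map_sub]; exact h x hx2
          · exact h1 x hx2 y hy2 hxy
      · intro x hx
        rcases Finset.mem_insert.1 hx with rfl | hx
        · exact ⟨x, Finset.mem_insert_self _ _, by simp⟩
        · obtain ⟨y, hy, hxy⟩ := h2 x hx
          exact ⟨y, Finset.mem_insert_of_mem hy, hxy⟩

lemma lat_dirichlet (hna : ∀ x y : L, A (x + y) ≤ max (A x) (A y)) (Q : ℝ) (hQ : 1 < Q)
    (hval : ∀ x : L, x ≠ 0 → ∃ n : ℤ, A x = Q ^ n)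
    (hsurj : ∀ n : ℤ, ∃ x : L, x ≠ 0 ∧ A x = Q ^ n)
    (hres : ∃ s : Finset L, ∀ x : L, A x ≤ 1 → ∃ y ∈ s, A (x - y) < 1)
    (R : Subring L) (D : ℕ) (hD : ∀ z, ∃ r ∈ R, A (z - r) ≤ Q ^ D) (α : L) (n : ℕ) :
    ∃ p ∈ R, ∃ q ∈ R, q ≠ 0 ∧ A (p - q * α) ≤ Q ^ D * (Q ^ n)⁻¹ ∧ A q ≤ Q ^ (n + 1) * Q ^ D := by
  classical
  have hQ0 : 0 < Q := by linarith
  obtain ⟨T0, hT0⟩ := lat_cover A hna Q hQ hval hsurj hres n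
  obtain ⟨F0, hF0, hsep, hcov⟩ := lat_sep A (T0.filter (fun y => A y ≤ Q ^ n))
  have hFle : ∀ f ∈ F0, A f ≤ Q ^ n := fun f hf => (Finset.mem_filter.1 (hF0 hf)).2
  have hFcov : ∀ x, A x ≤ Q ^ n → ∃ f ∈ F0, A (x - f) ≤ 1 := by
    intro x hx
    obtain ⟨y, hy, hxy⟩ := hT0 x hx
    have hyn : A y ≤ Q ^ n := by
      have := na_sub A hna x (x - y)
      rw [sub_sub_cancel] at this
      exact this.trans (max_le hx (hxy.trans (one_le_pow₀ hQ.le)))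
    obtain ⟨f, hf, hyf⟩ := hcov y (Finset.mem_filter.2 ⟨hy, hyn⟩)
    refine ⟨f, hf, ?_⟩
    have := hna (x - y) (y - f)
    rw [sub_add_sub_cancel] at this
    exact this.trans (max_le hxy hyf)
  obtain ⟨z, hz0, hz⟩ := hsurj ((n + 1 : ℕ) : ℤ)
  rw [zpow_natCast] at hz
  have hQn : Q ^ n < Q ^ (n + 1) := pow_lt_pow_right₀ hQ (Nat.lt_succ_self n)
  have hzF : z ∉ F0 := fun h => absurd (hFle z h) (by rw [hz]; exact not_le.2 hQn)
  have hzsep : ∀ f ∈ F0, 1 < A (z - f) := by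
    intro f hf
    rw [na_sub_l A hna (by rw [hz]; exact (hFle f hf).trans_lt hQn), hz]
    exact one_lt_pow₀ hQ (Nat.succ_ne_zero n)
  have hEsep : ∀ x ∈ insert z F0, ∀ y ∈ insert z F0, x ≠ y → 1 < A (x - y) := by
    intro x hx y hy hxy
    rcases Finset.mem_insert.1 hx with rfl | hx2
    · rcases Finset.mem_insert.1 hy with rfl | hy2
      · exact absurd rfl hxy
      · exact hzsep y hy2
    · rcases Finset.mem_insert.1 hy with rfl | hy2
      · rw [A.map_sub]; exact hzsep x hx2
      · exact hsep x hx2 y hy2 hxy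
  have hEle : ∀ x ∈ insert z F0, A x ≤ Q ^ (n + 1) := by
    intro x hx
    rcases Finset.mem_insert.1 hx with rfl | hx
    · exact hz.le
    · exact (hFle x hx).trans hQn.le
  obtain ⟨l, hl0, hl⟩ := hsurj (D : ℤ)
  obtain ⟨μ, hμ0, hμ⟩ := hsurj ((n : ℤ) - D)
  rw [zpow_natCast] at hl
  have hμ' : A μ = Q ^ n * (Q ^ D)⁻¹ := by
    rw [hμ, zpow_sub₀ hQ0.ne', zpow_natCast, zpow_natCast, div_eq_mul_inv]
  have hQD : 0 < Q ^ D := by positivity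
  have hQnp : 0 < Q ^ n := by positivity
  choose g hgR hg using hD
  have hfex : ∀ e : L, ∃ f ∈ F0, A (μ * (g (l * e) * α - g (g (l * e) * α)) - f) ≤ 1 := by
    intro e
    apply hFcov
    rw [map_mul, hμ']
    calc _ ≤ Q ^ n * (Q ^ D)⁻¹ * Q ^ D := mul_le_mul_of_nonneg_left (hg _) (by positivity)
      _ = Q ^ n := by field_simp
  choose f hfF hf using hfex
  obtain ⟨e, he, e', he', hee, hfe⟩ := Finset.exists_ne_map_eq_of_card_lt_of_maps_to
    (s := insert z F0) (t := F0) (f := f)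
    (by rw [Finset.card_insert_of_notMem hzF]; omega) (fun e _ => hfF e)
  have hgn : ∀ x ∈ insert z F0, A (g (l * x)) ≤ Q ^ (n + 1) * Q ^ D := by
    intro x hx
    have h1 := na_sub A hna (l * x) (l * x - g (l * x))
    rw [sub_sub_cancel] at h1
    refine h1.trans (max_le ?_ ?_)
    · rw [map_mul, hl, mul_comm]
      exact mul_le_mul_of_nonneg_right (hEle x hx) hQD.le
    · refine (hg _).trans ?_
      nlinarith [one_le_pow₀ hQ.le (n := n + 1)]
  refine ⟨g (g (l * e) * α) - g (g (l * e') * α), R.sub_mem (hgR _) (hgR _),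
    g (l * e) - g (l * e'), R.sub_mem (hgR _) (hgR _), ?_, ?_, ?_⟩
  · intro h0
    have h1 := hEsep e he e' he' hee
    have h2 : l * (e - e') = (l * e - g (l * e)) - (l * e' - g (l * e')) := by
      linear_combination h0
    have h3 := na_sub A hna (l * e - g (l * e)) (l * e' - g (l * e'))
    rw [← h2, map_mul, hl] at h3
    have h4 := h3.trans (max_le (hg _) (hg _))
    nlinarith
  · have h1 := na_sub A hna (μ * (g (l * e) * α - g (g (l * e) * α)) - f e)
      (μ * (g (l * e') * α - g (g (l * e') * α)) - f e')
    have h2 := h1.trans (max_le (hf e) (hf e'))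
    have h3 : (μ * (g (l * e) * α - g (g (l * e) * α)) - f e) -
      (μ * (g (l * e') * α - g (g (l * e') * α)) - f e') =
      -(μ * (g (g (l * e) * α) - g (g (l * e') * α) - (g (l * e) - g (l * e')) * α)) := by
      rw [hfe]; ring
    rw [h3, A.map_neg, map_mul, hμ'] at h2
    rw [← div_eq_mul_inv, le_div_iff₀ hQnp]
    have h5 : Q ^ D * (Q ^ D)⁻¹ = 1 := mul_inv_cancel₀ hQD.ne'
    have h6 := mul_le_mul_of_nonneg_left h2 hQD.le
    calc _ = Q ^ D * (Q ^ D)⁻¹ * (A (g (g (l * e) * α) - g (g (l * e') * α) -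
              (g (l * e) - g (l * e')) * α) * Q ^ n) := by rw [h5, one_mul]
      _ ≤ _ := by linarith
  · exact (na_sub A hna _ _).trans (max_le (hgn e he) (hgn e' he'))

lemma lat_goodvec (hna : ∀ x y : L, A (x + y) ≤ max (A x) (A y)) (Q : ℝ) (hQ : 1 < Q)
    (hval : ∀ x : L, x ≠ 0 → ∃ n : ℤ, A x = Q ^ n)
    (hsurj : ∀ n : ℤ, ∃ x : L, x ≠ 0 ∧ A x = Q ^ n)
    (hres : ∃ s : Finset L, ∀ x : L, A x ≤ 1 → ∃ y ∈ s, A (x - y) < 1)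
    (R : Subring L) (hR : ∀ x ∈ R, x ≠ 0 → 1 ≤ A x)
    (hdense : ∀ x : L, ∀ ε : ℝ, 0 < ε → ∃ p ∈ R, ∃ q ∈ R, q ≠ 0 ∧ A (x - p / q) < ε)
    (α α' : L) (c : ℝ) (hc : 0 < c)
    (hN : ∀ p ∈ R, ∀ q ∈ R, q ≠ 0 → c ≤ A (p - q * α) * A (p - q * α')) :
    ∃ C : ℝ, 0 < C ∧ ∀ m : ℕ, ∃ p ∈ R, ∃ q ∈ R, A (p - q * α') = Q ^ m * A (p - q * α) ∧
      0 < A (p - q * α) ∧ A (p - q * α) * A (p - q * α') ≤ C := by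
  have hQ0 : 0 < Q := by linarith
  obtain ⟨D, hD⟩ := lat_cocompact A hna Q hQ hval hsurj hres R hR hdense
  set C1 : ℝ := Q ^ (D + 1) * (1 + A (α - α')) with hC1
  have hδ := A.nonneg (α - α')
  have hQD : 0 < Q ^ D := by positivity
  have hC1p : 0 < C1 := by positivity
  have hC1a : Q ^ D ≤ C1 := by
    rw [hC1, pow_succ]; nlinarith [mul_nonneg hQD.le hδ, mul_nonneg hQD.le (by linarith : 0 ≤ Q - 1), mul_nonneg (mul_nonneg hQD.le hQ0.le) hδ]
  have hdir : ∀ n : ℕ, ∃ p ∈ R, ∃ q ∈ R, q ≠ 0 ∧ A (p - q * α) ≤ C1 * (Q ^ n)⁻¹ ∧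
      A (p - q * α') ≤ C1 * Q ^ n := by
    intro n
    obtain ⟨p, hp, q, hq, hq0, h1, h2⟩ := lat_dirichlet A hna Q hQ hval hsurj hres R D hD α n
    have hQn : 0 < Q ^ n := by positivity
    have hQn1 : 1 ≤ Q ^ n := one_le_pow₀ hQ.le
    refine ⟨p, hp, q, hq, hq0, h1.trans (mul_le_mul_of_nonneg_right hC1a (by positivity)), ?_⟩
    have e : p - q * α' = (p - q * α) + q * (α - α') := by ring
    rw [e]
    refine (hna _ _).trans (max_le ?_ ?_)
    · refine h1.trans ?_
      have : (Q ^ n)⁻¹ ≤ Q ^ n := (inv_le_one_of_one_le₀ hQn1).trans hQn1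
      exact mul_le_mul hC1a this (by positivity) hC1p.le
    · rw [map_mul]
      calc A q * A (α - α') ≤ (Q ^ (n + 1) * Q ^ D) * A (α - α') :=
            mul_le_mul_of_nonneg_right h2 hδ
        _ ≤ (Q ^ (n + 1) * Q ^ D) * (1 + A (α - α')) :=
            mul_le_mul_of_nonneg_left (by linarith) (by positivity)
        _ = C1 * Q ^ n := by rw [hC1]; ring
  obtain ⟨k, hk⟩ := pow_unbounded_of_one_lt (C1 ^ 2 / c) hQ
  obtain ⟨J, hJ⟩ := pow_unbounded_of_one_lt (Q ^ D * (C1 * Q ^ k)) hQ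
  refine ⟨Q ^ (2 * J + 1), by positivity, fun m => ?_⟩
  set n := m / 2 with hn
  set e := m % 2 with he
  have hm : m = 2 * n + e := by omega
  have he1 : e ≤ 1 := by omega
  obtain ⟨p1, hp1, q1, hq1, hq10, h1, h1'⟩ := hdir n
  obtain ⟨p2, hp2, q2, hq2, hq20, h2, h2'⟩ := hdir (n + k)
  have hN1 := hN p1 hp1 q1 hq1 hq10
  have hN2 := hN p2 hp2 q2 hq2 hq20
  set x1 := p1 - q1 * α
  set x1' := p1 - q1 * α'
  set x2 := p2 - q2 * α
  set x2' := p2 - q2 * α'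
  have hQn : 0 < Q ^ n := by positivity
  have hQk : 1 ≤ Q ^ k := one_le_pow₀ hQ.le
  have hΔ : x1 * x2' - x2 * x1' ≠ 0 := by
    intro h0
    have e1 : A x1 * A x2' = A x2 * A x1' := by
      rw [← map_mul, ← map_mul, sub_eq_zero.1 h0]
    have e2 : A x2 * A x1' ≤ C1 ^ 2 * (Q ^ k)⁻¹ := by
      calc _ ≤ (C1 * (Q ^ (n + k))⁻¹) * (C1 * Q ^ n) :=
            mul_le_mul h2 h1' (A.nonneg _) (by positivity)
        _ = _ := by rw [pow_add]; field_simp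
    have e3 : C1 ^ 2 * (Q ^ k)⁻¹ < c := by
      rw [div_lt_iff₀ hc] at hk
      rw [← div_eq_mul_inv, div_lt_iff₀ (by positivity)]; linarith
    have e4 : c * c ≤ (A x2 * A x1') * (A x2 * A x1') := by
      calc c * c ≤ (A x1 * A x1') * (A x2 * A x2') := mul_le_mul hN1 hN2 hc.le (hc.le.trans hN1)
        _ = (A x1 * A x2') * (A x2 * A x1') := by ring
        _ = _ := by rw [e1]
    have e5 : 0 ≤ A x2 * A x1' := mul_nonneg (A.nonneg _) (A.nonneg _)
    nlinarith
  obtain ⟨y, hy0, hy⟩ := hsurj ((J : ℤ) - n)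
  obtain ⟨y', hy0', hy'⟩ := hsurj ((J + n + e : ℕ) : ℤ)
  rw [zpow_natCast] at hy'
  rw [zpow_sub₀ hQ0.ne', zpow_natCast, zpow_natCast, div_eq_mul_inv] at hy
  obtain ⟨r1, hr1, hs1⟩ := hD ((y * x2' - x2 * y') / (x1 * x2' - x2 * x1'))
  obtain ⟨r2, hr2, hs2⟩ := hD ((x1 * y' - y * x1') / (x1 * x2' - x2 * x1'))
  have hs1Δ : (y * x2' - x2 * y') / (x1 * x2' - x2 * x1') * (x1 * x2' - x2 * x1')
      = y * x2' - x2 * y' := div_mul_cancel₀ _ hΔ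
  have hs2Δ : (x1 * y' - y * x1') / (x1 * x2' - x2 * x1') * (x1 * x2' - x2 * x1')
      = x1 * y' - y * x1' := div_mul_cancel₀ _ hΔ
  set s1 := (y * x2' - x2 * y') / (x1 * x2' - x2 * x1')
  set s2 := (x1 * y' - y * x1') / (x1 * x2' - x2 * x1')
  have hy1 : y = s1 * x1 + s2 * x2 := by
    apply mul_right_cancel₀ hΔ
    linear_combination -x1 * hs1Δ - x2 * hs2Δ
  have hy1' : y' = s1 * x1' + s2 * x2' := by
    apply mul_right_cancel₀ hΔ
    linear_combination -x1' * hs1Δ - x2' * hs2Δ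
  have hd1 : A (y - (r1 * x1 + r2 * x2)) < A y := by
    have : y - (r1 * x1 + r2 * x2) = (s1 - r1) * x1 + (s2 - r2) * x2 := by rw [hy1]; ring
    have hlt : Q ^ D * (C1 * (Q ^ n)⁻¹) < A y := by
      rw [hy, ← mul_assoc]
      apply mul_lt_mul_of_pos_right _ (by positivity)
      refine lt_of_le_of_lt ?_ hJ
      exact mul_le_mul_of_nonneg_left (le_mul_of_one_le_right hC1p.le hQk) hQD.le
    rw [this]
    refine lt_of_le_of_lt ((hna _ _).trans (max_le ?_ ?_)) hlt
    · rw [map_mul]; exact mul_le_mul hs1 h1 (A.nonneg _) hQD.le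
    · rw [map_mul]
      refine mul_le_mul hs2 (h2.trans ?_) (A.nonneg _) hQD.le
      apply mul_le_mul_of_nonneg_left _ hC1p.le
      apply inv_anti₀ hQn
      rw [pow_add]; exact le_mul_of_one_le_right hQn.le hQk
  have hd1' : A (y' - (r1 * x1' + r2 * x2')) < A y' := by
    have : y' - (r1 * x1' + r2 * x2') = (s1 - r1) * x1' + (s2 - r2) * x2' := by
      rw [hy1']; ring
    have hlt : Q ^ D * (C1 * Q ^ (n + k)) < A y' := by
      rw [hy']
      calc Q ^ D * (C1 * Q ^ (n + k)) = Q ^ D * (C1 * Q ^ k) * Q ^ n := by ring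
        _ < Q ^ J * Q ^ n := mul_lt_mul_of_pos_right hJ hQn
        _ = Q ^ (J + n) := by ring
        _ ≤ Q ^ (J + n + e) := pow_le_pow_right₀ hQ.le (by omega)
    rw [this]
    refine lt_of_le_of_lt ((hna _ _).trans (max_le ?_ ?_)) hlt
    · rw [map_mul]
      refine mul_le_mul hs1 (h1'.trans ?_) (A.nonneg _) hQD.le
      apply mul_le_mul_of_nonneg_left _ hC1p.le
      exact pow_le_pow_right₀ hQ.le (by omega)
    · rw [map_mul]; exact mul_le_mul hs2 h2' (A.nonneg _) hQD.le
  rw [A.map_sub] at hd1 hd1'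
  have f1 := na_eq_of_sub A hna hd1
  have f1' := na_eq_of_sub A hna hd1'
  refine ⟨r1 * p1 + r2 * p2, R.add_mem (R.mul_mem hr1 hp1) (R.mul_mem hr2 hp2),
    r1 * q1 + r2 * q2, R.add_mem (R.mul_mem hr1 hq1) (R.mul_mem hr2 hq2), ?_⟩
  have g1 : r1 * p1 + r2 * p2 - (r1 * q1 + r2 * q2) * α = r1 * x1 + r2 * x2 := by
    simp only [x1, x2]; ring
  have g1' : r1 * p1 + r2 * p2 - (r1 * q1 + r2 * q2) * α' = r1 * x1' + r2 * x2' := by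
    simp only [x1', x2']; ring
  rw [g1, g1', f1, f1', hy, hy']
  refine ⟨?_, by positivity, ?_⟩
  · rw [hm]
    field_simp
    ring
  · calc Q ^ J * (Q ^ n)⁻¹ * Q ^ (J + n + e) = Q ^ (2 * J + e) := by
          rw [pow_add _ (J + n), pow_add _ J n, pow_add, two_mul, pow_add]; field_simp
      _ ≤ _ := pow_le_pow_right₀ hQ.le (by omega)

end lattice

section arith
variable {L : Type*} [Field L]

structure QD (A : AbsoluteValue L ℝ) (R : Subring L) (AA BB CC α α' : L) : Prop where
  hna : ∀ x y : L, A (x + y) ≤ max (A x) (A y)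
  hR : ∀ x ∈ R, x ≠ 0 → 1 ≤ A x
  hAA : AA ∈ R
  hBB : BB ∈ R
  hCC : CC ∈ R
  hAA0 : AA ≠ 0
  v1 : AA * (α + α') = -BB
  v2 : AA * (α * α') = CC
  hne : α ≠ α'
  irr : ∀ p ∈ R, ∀ q ∈ R, p + q * α = 0 → q = 0
  irr' : ∀ p ∈ R, ∀ q ∈ R, p + q * α' = 0 → q = 0

lemma QD.symm {A : AbsoluteValue L ℝ} {R : Subring L} {AA BB CC α α' : L}
    (h : QD A R AA BB CC α α') : QD A R AA BB CC α' α :=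
  ⟨h.hna, h.hR, h.hAA, h.hBB, h.hCC, h.hAA0, by rw [add_comm]; exact h.v1,
    by rw [mul_comm α' α]; exact h.v2, h.hne.symm, h.irr', h.irr⟩

def PairOf (A : AbsoluteValue L ℝ) (R : Subring L) (α α' β β' : L) : Prop :=
  ∃ a ∈ R, ∃ b ∈ R, ∃ c ∈ R, ∃ d ∈ R, A (a * d - b * c) = 1 ∧
    β * (c * α + d) = a * α + b ∧ β' * (c * α' + d) = a * α' + b

variable {A : AbsoluteValue L ℝ} {R : Subring L} {AA BB CC α α' : L}

lemma QD.ne0 (h : QD A R AA BB CC α α') {X Y : L} (hX : X ∈ R) (hY : Y ∈ R)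
    (h0 : ¬ (X = 0 ∧ Y = 0)) : X + Y * α ≠ 0 := by
  intro e
  have hY0 := h.irr X hX Y hY e
  rw [hY0] at e
  exact h0 ⟨by simpa using e, hY0⟩

lemma QD.norm (h : QD A R AA BB CC α α') {X Y : L} (hX : X ∈ R) (hY : Y ∈ R)
    (h0 : ¬ (X = 0 ∧ Y = 0)) : 1 ≤ A AA * (A (X + Y * α) * A (X + Y * α')) := by
  have e : AA * X ^ 2 - BB * (X * Y) + CC * Y ^ 2 = AA * ((X + Y * α) * (X + Y * α')) := by
    linear_combination (X * Y) * h.v1.symm - Y ^ 2 * h.v2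
  have := h.hR (AA * X ^ 2 - BB * (X * Y) + CC * Y ^ 2)
    (R.add_mem (R.sub_mem (R.mul_mem h.hAA (R.pow_mem hX 2)) (R.mul_mem h.hBB (R.mul_mem hX hY)))
      (R.mul_mem h.hCC (R.pow_mem hY 2)))
    (by rw [e]; exact mul_ne_zero h.hAA0 (mul_ne_zero (h.ne0 hX hY h0) (h.symm.ne0 hX hY h0)))
  rwa [e, map_mul, map_mul] at this

lemma QD.a1 (h : QD A R AA BB CC α α') : 1 ≤ A AA := h.hR _ h.hAA h.hAA0

lemma QD.pos (h : QD A R AA BB CC α α') : 0 < A (α - α') := A.pos (sub_ne_zero.2 h.hne)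

/-- norm of the automorphy factor -/
lemma QD.pair_n (h : QD A R AA BB CC α α') {a b c d β β' : L}
    (hc : c ∈ R) (hd : d ∈ R)
    (hdet : A (a * d - b * c) = 1) (e : β * (c * α + d) = a * α + b)
    (e' : β' * (c * α' + d) = a * α' + b) :
    1 ≤ A AA * (A (c * α + d) * A (c * α' + d)) ∧
    A (β - β') * (A (c * α + d) * A (c * α' + d)) = A (α - α') := by
  have h0 : ¬ (d = 0 ∧ c = 0) := by
    rintro ⟨rfl, rfl⟩
    simp at hdet
  constructor
  · have := h.norm hd hc h0
    rwa [add_comm d, add_comm d] at this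
  · rw [← map_mul, ← map_mul]
    have : (β - β') * ((c * α + d) * (c * α' + d)) = (a * d - b * c) * (α - α') := by
      linear_combination (c * α' + d) * e - (c * α + d) * e'
    rw [this, map_mul, hdet, one_mul]

lemma QD.pair_pos (h : QD A R AA BB CC α α') {β β' : L} (hp : PairOf A R α α' β β') :
    0 < A (β - β') := by
  obtain ⟨a, ha, b, hb, c, hc, d, hd, hdet, e, e'⟩ := hp
  obtain ⟨h1, h2⟩ := h.pair_n hc hd hdet e e'
  have := h.pos
  rcases (A.nonneg (β - β')).lt_or_eq with h3 | h3
  · exact h3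
  · rw [← h3, zero_mul] at h2; linarith

lemma QD.pair_le (h : QD A R AA BB CC α α') {β β' : L} (hp : PairOf A R α α' β β') :
    A (β - β') ≤ A AA * A (α - α') := by
  have hpos := h.pair_pos hp
  obtain ⟨a, ha, b, hb, c, hc, d, hd, hdet, e, e'⟩ := hp
  obtain ⟨h1, h2⟩ := h.pair_n hc hd hdet e e'
  rw [← h2]
  nlinarith

lemma QD.cusp (h : QD A R AA BB CC α α') {β β' : L} (hp : PairOf A R α α' β β')
    {p q : L} (hpR : p ∈ R) (hqR : q ∈ R) (hq : q ≠ 0) :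
    A (β - β') ≤ A AA * A (α - α') * A q ^ 2 * (A (p / q - β) * A (p / q - β')) := by
  have hpos := h.pair_pos hp
  obtain ⟨a, ha, b, hb, c, hc, d, hd, hdet, e, e'⟩ := hp
  obtain ⟨h1, h2⟩ := h.pair_n hc hd hdet e e'
  have hX : p * d - q * b ∈ R := R.sub_mem (R.mul_mem hpR hd) (R.mul_mem hqR hb)
  have hY : p * c - q * a ∈ R := R.sub_mem (R.mul_mem hpR hc) (R.mul_mem hqR ha)
  have h0 : ¬ (p * d - q * b = 0 ∧ p * c - q * a = 0) := by
    rintro ⟨z1, z2⟩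
    have : q * (a * d - b * c) = 0 := by linear_combination c * z1 - d * z2
    rcases mul_eq_zero.1 this with z | z
    · exact hq z
    · rw [z] at hdet; simp at hdet
  have hN := h.norm hX hY h0
  have hpq : p / q * q = p := div_mul_cancel₀ _ hq
  generalize p / q = ρ at hpq ⊢
  have f : p * d - q * b + (p * c - q * a) * α = q * (ρ - β) * (c * α + d) := by
    linear_combination -(c * α + d) * hpq + q * e
  have f' : p * d - q * b + (p * c - q * a) * α' = q * (ρ - β') * (c * α' + d) := by
    linear_combination -(c * α' + d) * hpq + q * e'
  rw [f, f'] at hN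
  simp only [map_mul] at hN
  rw [← h2]
  have := mul_le_mul_of_nonneg_left hN hpos.le
  calc A (β - β') = A (β - β') * 1 := by ring
    _ ≤ _ := this
    _ = _ := by ring

lemma QD.res (h : QD A R AA BB CC α α') {a b c d β : L} 
    (e : β * (c * α + d) = a * α + b) :
    (-AA*CC*a^2+AA^2*b^2-BB*CC*a*c+AA*BB*b*d-CC^2*c^2+AA*CC*d^2) +
    (-AA*BB*a^2+2*AA^2*a*b-BB^2*a*c+AA*BB*(a*d+b*c)-BB*CC*c^2+2*AA*CC*c*d) * α
     = AA ^ 2 * (c * α + d) ^ 2 * ((β - α) * (β - α')) := by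
  have hr : AA * α ^ 2 = - BB * α - CC := by
    linear_combination α * h.v1 - h.v2
  have h1 : AA ^ 2 * (c * α + d) ^ 2 * ((β - α) * (β - α'))
     = AA * (AA * (a * α + b)^2 + BB * (a*α+b) * (c*α+d) + CC * (c*α+d)^2) := by
    rw [← e]
    linear_combination (-AA * (c * α + d)^2 * β) * h.v1 + AA * (c*α+d)^2 * h.v2
  rw [h1]
  linear_combination (-AA * a^2 - BB * a * c - CC * c^2) * hr

set_option maxHeartbeats 2000000 in
lemma QD.key (h : QD A R AA BB CC α α') {β β' : L} (hp : PairOf A R α α' β β')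
    {p q : L} (hpR : p ∈ R) (hqR : q ∈ R) (hq : q ≠ 0) {M C : ℝ} (hM : 1 < M)
    (hMC : A AA ^ 11 * C ^ 2 * A (α - α') ^ 4 < M)
    (hu : A (p / q - α') = M * A (p / q - α) ∨ A (p / q - α) = M * A (p / q - α'))
    (hC : A q ^ 2 * (A (p / q - α) * A (p / q - α')) ≤ C) :
    A (p / q - β') ≤ M * A (p / q - β) := by
  by_contra hcon
  push Not at hcon
  have hna := h.hna
  have hcusp := h.cusp hp hpR hqR hq
  have hle := h.pair_le hp
  have hpos := h.pair_pos hp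
  have hδ := h.pos
  have ha1 := h.a1
  obtain ⟨a, ha, b, hb, c, hc, d, hd, hdet, e, e'⟩ := hp
  obtain ⟨h1, h2⟩ := h.pair_n hc hd hdet e e'
  have hqp : 0 < A q := A.pos hq
  generalize p / q = ρ at *
  have hM0 : 0 < M := by linarith
  have nb := A.nonneg (ρ - β)
  have nb' := A.nonneg (ρ - β')
  have na := A.nonneg (ρ - α)
  have na' := A.nonneg (ρ - α')
  have hδ' : A (β - β') = A (ρ - β') := by
    have : β - β' = (ρ - β') - (ρ - β) := by ring
    rw [this]
    exact na_sub_l A hna (by nlinarith)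
  -- the two alphas
  have hnz : 0 < A (ρ - α) ∨ 0 < A (ρ - α') := by
    by_contra hh
    push Not at hh
    have z1 := (A.eq_zero).1 (le_antisymm hh.1 na)
    have z2 := (A.eq_zero).1 (le_antisymm hh.2 na')
    exact h.hne (by linear_combination z2 - z1)
  have hδM : A (ρ - α) * A (ρ - α') * M = A (α - α') ^ 2 ∧
      ((A (ρ - α') = A (α - α') ∧ A (ρ - α) * M = A (α - α')) ∨
       (A (ρ - α) = A (α - α') ∧ A (ρ - α') * M = A (α - α'))) := by
    rcases hu with hu | hu
    · have hp : 0 < A (ρ - α) := by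
        rcases hnz with hh | hh
        · exact hh
        · rw [hu] at hh; exact pos_of_mul_pos_right hh hM0.le
      have : A (α - α') = A (ρ - α') := by
        have : α - α' = (ρ - α') - (ρ - α) := by ring
        rw [this]
        exact na_sub_l A hna (by nlinarith)
      refine ⟨?_, Or.inl ⟨this.symm, ?_⟩⟩
      · rw [this, hu]; ring
      · rw [this, hu]; ring
    · have hp : 0 < A (ρ - α') := by
        rcases hnz with hh | hh
        · rw [hu] at hh; exact pos_of_mul_pos_right hh hM0.le
        · exact hh
      have : A (α - α') = A (ρ - α) := by
        have : α - α' = (ρ - α') - (ρ - α) := by ring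
        rw [this]
        exact na_sub_r A hna (by nlinarith)
      refine ⟨?_, Or.inr ⟨this.symm, ?_⟩⟩
      · rw [this, hu]; ring
      · rw [this, hu]; ring
  obtain ⟨hprod, hcase⟩ := hδM
  set δ := A (α - α') with hδdef
  set δ' := A (β - β') with hδ'def
  set n := A (c * α + d) * A (c * α' + d) with hn
  set k := A AA with hk
  have hk0 : 0 < k := by linarith
  have hC0 : 0 ≤ C := le_trans (by positivity) hC
  have hqC : A q ^ 2 * δ ^ 2 ≤ C * M := by
    rw [← hprod]
    have := mul_le_mul_of_nonneg_right hC hM0.le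
    linarith
  have hδlt : δ < k * C * δ' := by
    rw [← hδ'] at hcusp hcon
    have s1 : 1 ≤ k * δ * A q ^ 2 * A (ρ - β) := by
      by_contra hlt
      push Not at hlt
      have := mul_lt_mul_of_pos_right hlt hpos
      nlinarith
    have s2 : M < k * δ * A q ^ 2 * δ' := by
      have : 0 < k * δ * A q ^ 2 := by positivity
      have t := mul_lt_mul_of_pos_left hcon this
      nlinarith
    have s3 : M * δ < (k * C * δ') * M := by
      calc M * δ < (k * δ * A q ^ 2 * δ') * δ := mul_lt_mul_of_pos_right s2 hδ
        _ = (k * δ') * (A q ^ 2 * δ ^ 2) := by ring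
        _ ≤ (k * δ') * (C * M) := mul_le_mul_of_nonneg_left hqC (by positivity)
        _ = _ := by ring
    rw [mul_comm] at s3
    exact lt_of_mul_lt_mul_right s3 hM0.le
  have hnlt : n < k * C := by
    rw [← h2] at hδlt
    rw [mul_comm] at hδlt
    exact lt_of_mul_lt_mul_right hδlt hpos.le
  have hn0 : 0 ≤ n := by positivity
  have hD : δ ≤ k * δ := le_mul_of_one_le_left hδ.le ha1
  set D := k * δ with hDdef
  have hD0 : 0 < D := by positivity
  have tri : ∀ x y : L, A (x - y) ≤ max (A (ρ - x)) (A (ρ - y)) := by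
    intro x y
    have : x - y = (ρ - y) - (ρ - x) := by ring
    rw [this, max_comm]
    exact na_sub A hna _ _
  have hbM : A (ρ - β) ≤ D / M := by
    rw [le_div_iff₀ hM0]; rw [← hδ'] at hcon; linarith
  have hDM : D / M ≤ D := div_le_self hD0.le hM.le
  have hb'D : A (ρ - β') ≤ D := by rw [← hδ']; exact hle
  have hP1 : A (β - α) * A (β - α') ≤ D / M * D := by
    rcases hcase with ⟨z1, z2⟩ | ⟨z1, z2⟩
    · have w : A (ρ - α) ≤ D / M := by rw [le_div_iff₀ hM0]; linarith
      exact mul_le_mul ((tri _ _).trans (max_le hbM w))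
        ((tri _ _).trans (max_le (hbM.trans hDM) (z1.le.trans hD))) (A.nonneg _) (by positivity)
    · have w : A (ρ - α') ≤ D / M := by rw [le_div_iff₀ hM0]; linarith
      rw [mul_comm (D / M)]
      exact mul_le_mul ((tri _ _).trans (max_le (hbM.trans hDM) (z1.le.trans hD)))
        ((tri _ _).trans (max_le hbM w)) (A.nonneg _) (by positivity)
  have haD : A (ρ - α) ≤ D ∧ A (ρ - α') ≤ D := by
    rcases hcase with ⟨z1, z2⟩ | ⟨z1, z2⟩
    · have w : A (ρ - α) ≤ D / M := by rw [le_div_iff₀ hM0]; linarith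
      exact ⟨w.trans hDM, z1.le.trans hD⟩
    · have w : A (ρ - α') ≤ D / M := by rw [le_div_iff₀ hM0]; linarith
      exact ⟨z1.le.trans hD, w.trans hDM⟩
  have hP2 : A (β' - α) * A (β' - α') ≤ D * D :=
    mul_le_mul ((tri _ _).trans (max_le hb'D haD.1)) ((tri _ _).trans (max_le hb'D haD.2))
      (A.nonneg _) (by positivity)
  have r1 := h.res e
  have r2 := h.symm.res e'
  have hAA := h.hAA
  have hBB := h.hBB
  have hCC := h.hCC
  have h2R : (2 : L) ∈ R := by
    have := R.add_mem R.one_mem R.one_mem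
    rwa [one_add_one_eq_two] at this
  have hXR : (-AA*CC*a^2+AA^2*b^2-BB*CC*a*c+AA*BB*b*d-CC^2*c^2+AA*CC*d^2) ∈ R := by
    repeat' first | assumption | apply R.add_mem | apply R.sub_mem | apply R.mul_mem | apply R.pow_mem | apply R.neg_mem
  have hYR : (-AA*BB*a^2+2*AA^2*a*b-BB^2*a*c+AA*BB*(a*d+b*c)-BB*CC*c^2+2*AA*CC*c*d) ∈ R := by
    repeat' first | assumption | apply R.add_mem | apply R.sub_mem | apply R.mul_mem | apply R.pow_mem | apply R.neg_mem
  generalize (-AA*CC*a^2+AA^2*b^2-BB*CC*a*c+AA*BB*b*d-CC^2*c^2+AA*CC*d^2) = X at r1 r2 hXR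
  generalize (-AA*BB*a^2+2*AA^2*a*b-BB^2*a*c+AA*BB*(a*d+b*c)-BB*CC*c^2+2*AA*CC*c*d) = Y at r1 r2 hYR
  by_cases h0 : X = 0 ∧ Y = 0
  · have hcd : ¬ (d = 0 ∧ c = 0) := by
      rintro ⟨rfl, rfl⟩
      simp at hdet
    have hcn : c * α + d ≠ 0 := by
      have := h.ne0 hd hc hcd
      rwa [add_comm] at this
    have hcn' : c * α' + d ≠ 0 := by
      have := h.symm.ne0 hd hc hcd
      rwa [add_comm] at this
    rw [h0.1, h0.2, zero_mul, zero_add] at r1 r2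
    have q1 : (β - α) * (β - α') = 0 := by
      rcases mul_eq_zero.1 r1.symm with z | z
      · exact absurd z (mul_ne_zero (pow_ne_zero _ h.hAA0) (pow_ne_zero _ hcn))
      · exact z
    have q2 : (β' - α') * (β' - α) = 0 := by
      rcases mul_eq_zero.1 r2.symm with z | z
      · exact absurd z (mul_ne_zero (pow_ne_zero _ h.hAA0) (pow_ne_zero _ hcn'))
      · exact z
    have hbb : β ≠ β' := by
      rintro rfl
      simp [hδ'def] at hpos
    rcases mul_eq_zero.1 q1 with z | z <;> rcases mul_eq_zero.1 q2 with z' | z' <;>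
      rw [sub_eq_zero] at z z'
    · rw [z, z'] at hcon
      rcases hcase with ⟨y1, y2⟩ | ⟨y1, y2⟩ <;> nlinarith
    · exact hbb (z.trans z'.symm)
    · exact hbb (z.trans z'.symm)
    · rw [z, z'] at hcon
      rcases hcase with ⟨y1, y2⟩ | ⟨y1, y2⟩ <;> nlinarith
  · have hN := h.norm hXR hYR h0
    rw [r1, r2] at hN
    simp only [map_mul, map_pow] at hN
    have e1 : 1 ≤ k ^ 5 * n ^ 2 * ((A (β - α) * A (β - α')) * (A (β' - α) * A (β' - α'))) := by
      refine hN.trans (le_of_eq ?_)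
      rw [hn]; ring
    have e2 : (A (β - α) * A (β - α')) * (A (β' - α) * A (β' - α')) ≤ D / M * D * (D * D) :=
      mul_le_mul hP1 hP2 (mul_nonneg (A.nonneg _) (A.nonneg _)) (by positivity)
    have e3 : k ^ 5 * n ^ 2 ≤ k ^ 5 * (k * C) ^ 2 :=
      mul_le_mul_of_nonneg_left (pow_le_pow_left₀ hn0 hnlt.le 2) (by positivity)
    have e4 : 1 ≤ k ^ 5 * (k * C) ^ 2 * (D / M * D * (D * D)) :=
      e1.trans (mul_le_mul e3 e2 (by positivity) (by positivity))
    have e5 : k ^ 5 * (k * C) ^ 2 * (D / M * D * (D * D)) = k ^ 11 * C ^ 2 * δ ^ 4 / M := by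
      rw [hDdef]; ring
    rw [e5, le_div_iff₀ hM0] at e4
    linarith

end arith

section abstr
variable {L : Type*} [Field L]

noncomputable def mob (p q τ z : L) : L :=
  ((1 + τ * p * q) * z - τ * p ^ 2) / (τ * q ^ 2 * z + (1 - τ * p * q))

variable {A : AbsoluteValue L ℝ} {R : Subring L} {AA BB CC α α' : L}

lemma QD.pair_irr (h : QD A R AA BB CC α α') {β β' : L} (hp : PairOf A R α α' β β')
    {p q : L} (hpR : p ∈ R) (hqR : q ∈ R) (hq : q ≠ 0) : β ≠ p / q := by
  intro e
  have h1 := h.cusp hp hpR hqR hq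
  have h2 := h.pair_pos hp
  rw [← e, sub_self, map_zero] at h1
  linarith

lemma PairOf.swap {β β' : L} (hp : PairOf A R α α' β β') : PairOf A R α' α β' β := by
  obtain ⟨a, ha, b, hb, c, hc, d, hd, hdet, e, e'⟩ := hp
  exact ⟨a, ha, b, hb, c, hc, d, hd, hdet, e', e⟩

theorem hall_abstract (h : QD A R AA BB CC α α') (Q : ℝ) (hQ : 1 < Q)
    (hcomplete : ∀ u : ℕ → L,
      (∀ ε : ℝ, 0 < ε → ∃ N : ℕ, ∀ m n : ℕ, N ≤ m → N ≤ n → A (u m - u n) < ε) →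
      ∃ x : L, ∀ ε : ℝ, 0 < ε → ∃ N : ℕ, ∀ n : ℕ, N ≤ n → A (u n - x) < ε)
    (hval : ∀ x : L, x ≠ 0 → ∃ n : ℤ, A x = Q ^ n)
    (hsurj : ∀ n : ℤ, ∃ x : L, x ≠ 0 ∧ A x = Q ^ n)
    (hres : ∃ s : Finset L, ∀ x : L, A x ≤ 1 → ∃ y ∈ s, A (x - y) < 1)
    (hdense : ∀ x : L, ∀ ε : ℝ, 0 < ε → ∃ p ∈ R, ∃ q ∈ R, q ≠ 0 ∧ A (x - p / q) < ε)
    (Th : L → L → Prop)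
    (hTp : ∀ b b', Th b b' → PairOf A R α α' b b' ∨ PairOf A R α' α b b')
    (hsw : ∀ b b', Th b b' → Th b' b) (hT0 : Th α α')
    (hU : ∀ p ∈ R, ∀ q ∈ R, ∀ N : ℝ, ∃ τ ∈ R, N < A τ ∧ ∀ b b', Th b b' →
      Th (mob p q τ b) (mob p q τ b') ∧ Th (mob p q (-τ) b) (mob p q (-τ) b')) :
    ∃ m0 : ℕ, ∀ m : ℕ, m0 ≤ m → ∃ x : L, (∀ p ∈ R, ∀ q ∈ R, q ≠ 0 → x ≠ p / q) ∧
      (∀ b b', Th b b' → b ≠ x) ∧ (∀ b b', Th b b' → b ≠ b') ∧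
      (∀ b b', Th b b' → A (b - b') ≤ Q ^ m * A (x - b)) ∧
      ∀ ε > 0, ∃ b b', Th b b' ∧ A (b - b') < ε ∧ A (b - b') = Q ^ m * A (x - b) := by
  have hk1 := h.a1
  have hδ := h.pos
  have hk0 : 0 < A AA := by linarith
  obtain ⟨C, hC0, hgv⟩ := lat_goodvec A h.hna Q hQ hval hsurj hres R h.hR hdense α α' (A AA)⁻¹
    (by positivity) (by
      intro p hp q hq hq0
      have := h.norm hp (R.neg_mem hq) (by
        rintro ⟨_, z⟩; exact hq0 (neg_eq_zero.1 z))
      rw [inv_le_iff_one_le_mul₀' hk0]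
      rwa [neg_mul, neg_mul, ← sub_eq_add_neg, ← sub_eq_add_neg] at this)
  obtain ⟨m1, hm1⟩ := pow_unbounded_of_one_lt (A AA ^ 11 * C ^ 2 * A (α - α') ^ 4) hQ
  refine ⟨m1 + 1, fun m hm => ?_⟩
  have hMlt : A AA ^ 11 * C ^ 2 * A (α - α') ^ 4 < Q ^ m :=
    hm1.trans_le (pow_le_pow_right₀ hQ.le (by omega))
  have hM1 : 1 < Q ^ m := one_lt_pow₀ hQ (by omega)
  obtain ⟨p, hp, q, hq, g1, g2, g3⟩ := hgv m
  generalize Q ^ m = M at *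
  have hq0 : q ≠ 0 := by
    rintro rfl
    simp only [zero_mul, sub_zero] at g1 g2
    nlinarith
  have hqp : 0 < A q := A.pos hq0
  have hq1 : 1 ≤ A q := h.hR q hq hq0
  have hdiv : ∀ z, A (p - q * z) = A q * A (p / q - z) := by
    intro z
    rw [← map_mul]; congr 1; field_simp
  rw [hdiv, hdiv] at g1 g3
  rw [hdiv] at g2
  have hu : A (p / q - α') = M * A (p / q - α) := by
    apply mul_left_cancel₀ hqp.ne'
    rw [g1]; ring
  have hC : A q ^ 2 * (A (p / q - α) * A (p / q - α')) ≤ C := by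
    refine le_trans (le_of_eq ?_) g3; ring
  have hsymd : A (α' - α) = A (α - α') := A.map_sub _ _
  have Tr : ∀ b b', Th b b' → A (p / q - b') ≤ M * A (p / q - b) := by
    intro b b' hb
    rcases hTp b b' hb with hb | hb
    · exact h.key hb hp hq hq0 hM1 hMlt (Or.inl hu) hC
    · exact h.symm.key hb hp hq hq0 hM1 (by rw [hsymd]; exact hMlt) (Or.inr hu)
        (by rw [mul_comm (A (p / q - α'))]; exact hC)
  have Tpos : ∀ b b', Th b b' → 0 < A (b - b') := by
    intro b b' hb
    rcases hTp b b' hb with hb | hb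
    · exact h.pair_pos hb
    · exact h.symm.pair_pos hb
  have Tle : ∀ b b', Th b b' → A (b - b') ≤ A AA * A (α - α') := by
    intro b b' hb
    rcases hTp b b' hb with hb | hb
    · exact h.pair_le hb
    · rw [← hsymd]; exact h.symm.pair_le hb
  have Tcusp : ∀ b b', Th b b' → ∀ p ∈ R, ∀ q ∈ R, q ≠ 0 → A (b - b') ≤
      A AA * A (α - α') * A q ^ 2 * (A (p / q - b) * A (p / q - b')) := by
    intro b b' hb p hp q hq hq0
    rcases hTp b b' hb with hb | hb
    · exact h.cusp hb hp hq hq0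
    · rw [← hsymd]; exact h.symm.cusp hb hp hq hq0
  have Tirr : ∀ b b', Th b b' → ∀ p ∈ R, ∀ q ∈ R, q ≠ 0 → b ≠ p / q := by
    intro b b' hb p hp q hq hq0
    rcases hTp b b' hb with hb | hb
    · exact h.pair_irr hb hp hq hq0
    · exact h.symm.pair_irr hb hp hq hq0
  set ρ := p / q with hρ
  have hpρ : p = ρ * q := (div_mul_cancel₀ _ hq0).symm
  have hT1 : ∀ b b', Th (b + ρ) (b' + ρ) → b ≠ 0 := by
    intro b b' hb e
    apply Tirr _ _ hb p hp q hq hq0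
    rw [e, zero_add]
  set C2 := A AA * A (α - α') * A q ^ 2 with hC2
  have hC2p : 0 < C2 := by positivity
  set N := 1 + C2 + A (α' - ρ) + (A (α - ρ))⁻¹ with hN
  have hb0p : 0 < A (α - ρ) := A.pos (sub_ne_zero.2 (Tirr _ _ hT0 p hp q hq hq0))
  have hb0i : 0 < (A (α - ρ))⁻¹ := inv_pos.2 hb0p
  have hb0n := A.nonneg (α' - ρ)
  obtain ⟨t, htR, htN, ht⟩ := hU 1 R.one_mem 0 R.zero_mem N
  obtain ⟨τ, hτR, hτN, hτ⟩ := hU p hp q hq N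
  have hm1 : ∀ t z : L, mob 1 0 t z = z - t := by intro t z; simp [mob]
  have hm2 : ∀ τ ∈ R, τ ≠ 0 → ∀ b b', Th (b + ρ) (b' + ρ) →
      mob p q τ (b + ρ) = (b⁻¹ + τ * q ^ 2)⁻¹ + ρ := by
    intro τ hτR hτ0 b b' hb
    have hb0 := hT1 b b' hb
    have hne : 1 + τ * q ^ 2 * b ≠ 0 := by
      intro e
      apply Tirr _ _ hb (p * (τ * q) - 1)
        (R.sub_mem (R.mul_mem hp (R.mul_mem hτR hq)) R.one_mem) (τ * q ^ 2)
        (R.mul_mem hτR (R.pow_mem hq 2)) (mul_ne_zero hτ0 (pow_ne_zero 2 hq0))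
      rw [eq_div_iff (mul_ne_zero hτ0 (pow_ne_zero 2 hq0))]
      linear_combination e - τ * q * hpρ
    have e1 : (b⁻¹ + τ * q ^ 2)⁻¹ = b / (1 + τ * q ^ 2 * b) := by
      rw [inv_eq_iff_eq_inv, inv_div]; field_simp
    have e2 : τ * q ^ 2 * (b + ρ) + (1 - τ * p * q) = 1 + τ * q ^ 2 * b := by
      rw [hpρ]; ring
    rw [e1, mob, e2, div_add' _ _ _ hne]
    congr 1
    rw [hpρ]; ring
  have hτ0 : τ ≠ 0 := by
    rintro rfl
    rw [map_zero] at hτN; linarith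
  have hs1 : N < A (τ * q ^ 2) := by
    rw [map_mul, map_pow]
    exact hτN.trans_le (le_mul_of_one_le_right (A.nonneg _) (one_le_pow₀ hq1))
  have hsN : 0 < A (τ * q ^ 2) := by linarith
  obtain ⟨x, hx1, hx2⟩ := core_lemma A h.hna hcomplete (fun b b' => Th (b + ρ) (b' + ρ)) C2 M hM1 hC2p
    (fun b b' hb => hsw _ _ hb) hT1
    (fun b b' hb e => by
      have := Tpos _ _ hb
      rw [e, sub_self, map_zero] at this; exact lt_irrefl _ this)
    (fun b b' hb => by
      have := Tle _ _ hb
      rw [add_sub_add_right_eq_sub] at this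
      exact this.trans (le_mul_of_one_le_right (by positivity) (one_le_pow₀ hq1)))
    (fun b b' hb => by
      have h1 := hT1 _ _ hb
      have h2 := hT1 _ _ (hsw _ _ hb)
      have := Tcusp _ _ hb p hp q hq hq0
      rw [add_sub_add_right_eq_sub, ← hρ, sub_add_cancel_right, sub_add_cancel_right, A.map_neg,
        A.map_neg] at this
      rw [inv_sub_inv h1 h2, map_div₀, map_mul, div_le_iff₀ (mul_pos (A.pos h1) (A.pos h2)),
        A.map_sub]
      exact this)
    (fun b b' hb => by
      have := Tr _ _ hb
      rwa [sub_add_cancel_right, sub_add_cancel_right, A.map_neg, A.map_neg] at this)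
    (α - ρ) (α' - ρ) (by simpa using hT0)
    (by rw [A.map_sub α', A.map_sub α]; exact hu)
    t (τ * q ^ 2) (by linarith) (by linarith)
    (by nlinarith) (by linarith)
    (by rw [inv_lt_comm₀ hsN hb0p]; linarith)
    (fun b b' hb => by
      have := (ht _ _ hb).2
      rw [hm1, hm1] at this
      convert this using 1 <;> ring)
    (fun b b' hb => by
      have := (ht _ _ hb).1
      rw [hm1, hm1] at this
      convert this using 1 <;> ring)
    (fun b b' hb => by
      have := (hτ _ _ hb).1
      rwa [hm2 τ hτR hτ0 b b' hb, hm2 τ hτR hτ0 b' b (hsw _ _ hb)] at this)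
    (fun b b' hb => by
      have := (hτ _ _ hb).2
      rw [hm2 (-τ) (R.neg_mem hτR) (neg_ne_zero.2 hτ0) b b' hb,
        hm2 (-τ) (R.neg_mem hτR) (neg_ne_zero.2 hτ0) b' b (hsw _ _ hb)] at this
      rwa [neg_mul, ← sub_eq_add_neg, ← sub_eq_add_neg] at this)
  have key1 : ∀ b b', Th b b' → A (b - b') ≤ M * A (x + ρ - b) := by
    intro b b' hb
    have := hx1 (b - ρ) (b' - ρ) (by simpa using hb)
    rw [sub_sub_sub_cancel_right] at this
    convert this using 3
    ring
  have key2 : ∀ ε > 0, ∃ b b', Th b b' ∧ A (b - b') < ε ∧ A (b - b') = M * A (x + ρ - b) := by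
    intro ε hε
    obtain ⟨b, b', hb, h1, h2⟩ := hx2 ε hε
    refine ⟨b + ρ, b' + ρ, hb, ?_, ?_⟩
    · rwa [add_sub_add_right_eq_sub]
    · rwa [add_sub_add_right_eq_sub, add_sub_add_right_eq_sub]
  refine ⟨x + ρ, ?_, ?_, ?_, key1, key2⟩
  · intro p' hp' q' hq' hq0' e
    set C3 := A AA * A (α - α') * A q' ^ 2 with hC3
    have hC3p : 0 < C3 := by
      have : 0 < A q' := A.pos hq0'
      positivity
    obtain ⟨b, b', hb, h1, h2⟩ := key2 (C3⁻¹) (by positivity)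
    have h3 := Tcusp _ _ hb p' hp' q' hq' hq0'
    rw [e] at h2
    have hpos := Tpos _ _ hb
    have n1 := A.nonneg (p' / q' - b)
    have h4 : A (p' / q' - b) ≤ A (b - b') := by nlinarith
    have h5 : A (p' / q' - b') ≤ A (b - b') := by
      have := h.hna (p' / q' - b) (b - b')
      rw [sub_add_sub_cancel] at this
      exact this.trans (max_le h4 le_rfl)
    have h6 : A (b - b') ≤ C3 * (A (b - b') * A (b - b')) :=
      h3.trans (mul_le_mul_of_nonneg_left (mul_le_mul h4 h5 (A.nonneg _) hpos.le) hC3p.le)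
    have h7 : C3 * A (b - b') < 1 := by
      have := mul_lt_mul_of_pos_left h1 hC3p
      rwa [mul_inv_cancel₀ hC3p.ne'] at this
    nlinarith
  · intro b b' hb e
    have h1 := key1 b b' hb
    have h2 := Tpos _ _ hb
    rw [e, sub_self, map_zero] at h1
    rw [e] at h2
    linarith
  · intro b b' hb e
    have h2 := Tpos _ _ hb
    rw [e, sub_self, map_zero] at h2
    exact lt_irrefl _ h2

end abstr

section final

noncomputable def ugl {K : Type*} [Field K] (p q τ : K) : GL (Fin 2) K :=
  ⟨!![1 + τ * p * q, -(τ * p ^ 2); τ * q ^ 2, 1 - τ * p * q],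
   !![1 - τ * p * q, τ * p ^ 2; -(τ * q ^ 2), 1 + τ * p * q],
   by
    ext i j
    fin_cases i <;> fin_cases j <;> simp [Matrix.mul_apply, Fin.sum_univ_two] <;> ring,
   by
    ext i j
    fin_cases i <;> fin_cases j <;> simp [Matrix.mul_apply, Fin.sum_univ_two] <;> ring⟩

lemma ugl_inv {K : Type*} [Field K] (p q τ : K) : (ugl p q τ)⁻¹ = ugl p q (-τ) := by
  apply Units.ext
  change !![1 - τ * p * q, τ * p ^ 2; -(τ * q ^ 2), 1 + τ * p * q] =
    !![1 + -τ * p * q, -(-τ * p ^ 2); -τ * q ^ 2, 1 - -τ * p * q]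
  ext i j
  fin_cases i <;> fin_cases j <;> simp <;> ring

lemma ugl_mul {K : Type*} [Field K] (p q τ τ' : K) :
    ugl p q τ * ugl p q τ' = ugl p q (τ + τ') := by
  apply Units.ext
  change !![1 + τ * p * q, -(τ * p ^ 2); τ * q ^ 2, 1 - τ * p * q] *
    !![1 + τ' * p * q, -(τ' * p ^ 2); τ' * q ^ 2, 1 - τ' * p * q] =
    !![1 + (τ + τ') * p * q, -((τ + τ') * p ^ 2); (τ + τ') * q ^ 2, 1 - (τ + τ') * p * q]
  ext i j
  fin_cases i <;> fin_cases j <;> simp [Matrix.mul_apply, Fin.sum_univ_two] <;> ring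

lemma ugl_mem {K : Type*} [Field K] (R : Subring K) {p q τ : K} (hp : p ∈ R) (hq : q ∈ R)
    (hτ : τ ∈ R) (i j : Fin 2) : ((ugl p q τ : GL (Fin 2) K) : Matrix (Fin 2) (Fin 2) K) i j ∈ R := by
  have h1 : τ * p * q ∈ R := R.mul_mem (R.mul_mem hτ hp) hq
  have h2 : τ * p ^ 2 ∈ R := R.mul_mem hτ (R.pow_mem hp 2)
  have h3 : τ * q ^ 2 ∈ R := R.mul_mem hτ (R.pow_mem hq 2)
  change (!![1 + τ * p * q, -(τ * p ^ 2); τ * q ^ 2, 1 - τ * p * q] : Matrix (Fin 2) (Fin 2) K) i j ∈ R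
  fin_cases i <;> fin_cases j
  · simpa using R.add_mem R.one_mem h1
  · simpa using h2
  · simpa using h3
  · simpa using R.sub_mem R.one_mem h1

lemma homog_ugl {K L : Type*} [Field K] [Field L] (ι : K →+* L) (p q τ : K) (z : L) :
    homog ι (ugl p q τ) z = mob (ι p) (ι q) (ι τ) z := by
  change (ι ((!![1 + τ * p * q, -(τ * p ^ 2); τ * q ^ 2, 1 - τ * p * q] : Matrix (Fin 2) (Fin 2) K) 0 0) * z +
    ι ((!![1 + τ * p * q, -(τ * p ^ 2); τ * q ^ 2, 1 - τ * p * q] : Matrix (Fin 2) (Fin 2) K) 0 1)) /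
    (ι ((!![1 + τ * p * q, -(τ * p ^ 2); τ * q ^ 2, 1 - τ * p * q] : Matrix (Fin 2) (Fin 2) K) 1 0) * z +
    ι ((!![1 + τ * p * q, -(τ * p ^ 2); τ * q ^ 2, 1 - τ * p * q] : Matrix (Fin 2) (Fin 2) K) 1 1)) = _
  simp [mob, sub_eq_add_neg]

lemma den_ne {K L : Type*} [Field K] [Field L] (ι : K →+* L) {z : L} (hz : ∀ y : K, ι y ≠ z)
    (g : GL (Fin 2) K) : ι ((g : Matrix (Fin 2) (Fin 2) K) 1 0) * z +
      ι ((g : Matrix (Fin 2) (Fin 2) K) 1 1) ≠ 0 := by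
  intro e
  have hdet : (g : Matrix (Fin 2) (Fin 2) K).det ≠ 0 :=
    ((Matrix.isUnit_iff_isUnit_det _).1 g.isUnit).ne_zero
  rw [Matrix.det_fin_two] at hdet
  by_cases hc : (g : Matrix (Fin 2) (Fin 2) K) 1 0 = 0
  · rw [hc, map_zero, zero_mul, zero_add, map_eq_zero] at e
    rw [hc, e] at hdet
    simp at hdet
  · apply hz (-((g : Matrix (Fin 2) (Fin 2) K) 1 1) / (g : Matrix (Fin 2) (Fin 2) K) 1 0)
    rw [map_div₀, map_neg, div_eq_iff ((map_ne_zero ι).2 hc)]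
    linear_combination -e

lemma homog_mul {K L : Type*} [Field K] [Field L] (ι : K →+* L) {z : L} (hz : ∀ y : K, ι y ≠ z)
    (g h : GL (Fin 2) K) : homog ι g (homog ι h z) = homog ι (g * h) z := by
  have hd := den_ne ι hz h
  unfold homog
  rw [Units.val_mul]
  simp only [Matrix.mul_apply, Fin.sum_univ_two, map_add, map_mul]
  rw [← mul_div_mul_right _ _ hd]
  congr 1
  · rw [add_mul, mul_assoc, div_mul_cancel₀ _ hd]; ring
  · rw [add_mul, mul_assoc, div_mul_cancel₀ _ hd]; ring

lemma homog_one {K L : Type*} [Field K] [Field L] (ι : K →+* L) (z : L) :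
    homog ι (1 : GL (Fin 2) K) z = z := by
  simp [homog]

lemma capprox_eq {L : Type*} [Field L] (A : L → ℝ) (S : Set (L × L)) (x : L) (c : ℝ)
    (h1 : ∀ pr ∈ S, c ≤ A (x - pr.1) / A (pr.1 - pr.2)) (hA : ∀ z, 0 ≤ A z)
    (h2 : ∀ ε > 0, ∃ pr ∈ S, A (pr.1 - pr.2) < ε ∧ A (x - pr.1) / A (pr.1 - pr.2) = c) :
    c = capproxG A S x := by
  unfold capproxG
  have hev : ∀ᶠ pr in (Filter.principal S ⊓
      Filter.comap (fun pr : L × L => A (pr.1 - pr.2)) (nhds 0)),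
      c ≤ A (x - pr.1) / A (pr.1 - pr.2) :=
    Filter.Eventually.filter_mono inf_le_left (Filter.eventually_principal.2 h1)
  have hfr : ∃ᶠ pr in (Filter.principal S ⊓
      Filter.comap (fun pr : L × L => A (pr.1 - pr.2)) (nhds 0)),
      A (x - pr.1) / A (pr.1 - pr.2) ≤ c := by
    rw [Filter.frequently_iff]
    intro U hU
    rw [inf_comm, Filter.mem_inf_principal, Filter.mem_comap] at hU
    obtain ⟨t, ht, hsub⟩ := hU
    obtain ⟨ε, hε, hball⟩ := Metric.mem_nhds_iff.1 ht
    obtain ⟨pr, hpr, hlt, heq⟩ := h2 ε hε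
    refine ⟨pr, hsub ?_ hpr, heq.le⟩
    apply hball
    rw [Metric.mem_ball, Real.dist_eq, sub_zero, abs_of_nonneg (hA _)]
    exact hlt
  apply le_antisymm
  · exact Filter.le_liminf_of_le (Filter.IsCoboundedUnder.of_frequently_le hfr) hev
  · exact Filter.liminf_le_of_frequently_le hfr ⟨c, Filter.eventually_map.2 hev⟩

lemma clear_den {K : Type*} [Field K] (R : Subring K)
    (hRfrac : ∀ x : K, ∃ p q : K, p ∈ R ∧ q ∈ R ∧ q ≠ 0 ∧ x * q = p) (a b c : K) :
    ∃ D : K, D ≠ 0 ∧ a * D ∈ R ∧ b * D ∈ R ∧ c * D ∈ R := by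
  obtain ⟨p1, q1, hp1, hq1, h1, e1⟩ := hRfrac a
  obtain ⟨p2, q2, hp2, hq2, h2, e2⟩ := hRfrac b
  obtain ⟨p3, q3, hp3, hq3, h3, e3⟩ := hRfrac c
  refine ⟨q1 * q2 * q3, mul_ne_zero (mul_ne_zero h1 h2) h3, ?_, ?_, ?_⟩
  · have : a * (q1 * q2 * q3) = p1 * q2 * q3 := by rw [← e1]; ring
    rw [this]; exact R.mul_mem (R.mul_mem hp1 hq2) hq3
  · have : b * (q1 * q2 * q3) = q1 * p2 * q3 := by rw [← e2]; ring
    rw [this]; exact R.mul_mem (R.mul_mem hq1 hp2) hq3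
  · have : c * (q1 * q2 * q3) = q1 * q2 * p3 := by rw [← e3]; ring
    rw [this]; exact R.mul_mem (R.mul_mem hq1 hq2) hp3

end final

/-- Let `K` be a function field over `𝔽_q`, `v` a normalised discrete
valuation of `K` with completion `K_v` (here: a complete nonarchimedean valued field `L ⊇ K`
with dense image, value group `q_v^ℤ` and residue field of cardinality `q_v`), and `Γ` a
finite-index subgroup of `PGL₂(R_v)` (here: of the group `G0` of `GL₂`-matrices with entries,
and inverse entries, in the affine function ring `R_v` of `v`). For every quadratic
irrational `α ∈ K_v` over `K` (with Galois conjugate `α^σ`), there exists `m_α ∈ ℕ` such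
that for every integer `m ≥ m_α`, the value `q_v^{−m}` belongs to the quadratic Lagrange
spectrum `Sp(α, Γ)`: the spectrum contains a Hall ray. -/
theorem hall_ray_in_quadratic_spectrum
    (Fq : Type*) [Field Fq] [Fintype Fq]
    (K : Type*) [Field K] [Algebra (RatFunc Fq) K]
    (hFF : FunctionField Fq K)
    (L : Type*) [Field L] (ι : K →+* L)
    (qv : ℕ) (hqv : 1 < qv)
    (A : L → ℝ)
    (hA0 : ∀ x : L, A x = 0 ↔ x = 0)
    (hAmul : ∀ x y : L, A (x * y) = A x * A y)
    (hAna : ∀ x y : L, A (x + y) ≤ max (A x) (A y))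
    (hAval : ∀ x : L, x ≠ 0 → ∃ n : ℤ, A x = (qv : ℝ) ^ n)
    (hAsurj : ∀ n : ℤ, ∃ x : L, x ≠ 0 ∧ A x = (qv : ℝ) ^ n)
    -- the residue field has cardinality q_v
    (hres : ∃ s : Finset L, s.card = qv ∧
      ∀ x : L, A x ≤ 1 → ∃ y ∈ s, A (x - y) < 1)
    -- K is dense in its completion L
    (hdense : ∀ x : L, ∀ ε : ℝ, 0 < ε → ∃ y : K, A (x - ι y) < ε)
    -- L is complete
    (hcomplete : ∀ u : ℕ → L,
      (∀ ε : ℝ, 0 < ε → ∃ N : ℕ, ∀ m n : ℕ, N ≤ m → N ≤ n → A (u m - u n) < ε) →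
      ∃ x : L, ∀ ε : ℝ, 0 < ε → ∃ N : ℕ, ∀ n : ℕ, N ≤ n → A (u n - x) < ε)
    -- the affine function ring R_v : a finitely generated Fq-algebra with fraction field K,
    -- all of whose nonzero elements have their only pole at v
    (R : Subring K)
    (hRfrac : ∀ x : K, ∃ p q : K, p ∈ R ∧ q ∈ R ∧ q ≠ 0 ∧ x * q = p)
    (hRint : ∀ x : K, x ∈ R → x ≠ 0 → 1 ≤ A (ι x))
    -- Γ is a finite-index subgroup of PGL₂(R_v) (lifted to GL₂)
    (G0 : Subgroup (GL (Fin 2) K))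
    (hG0 : ∀ g : GL (Fin 2) K, g ∈ G0 ↔
      ((∀ i j : Fin 2, (g : Matrix (Fin 2) (Fin 2) K) i j ∈ R) ∧
       (∀ i j : Fin 2, ((g⁻¹ : GL (Fin 2) K) : Matrix (Fin 2) (Fin 2) K) i j ∈ R)))
    (Γ : Subgroup (GL (Fin 2) K)) (hΓG0 : Γ ≤ G0)
    (hindex : (Γ.subgroupOf G0).index ≠ 0)
    -- α is a quadratic irrational over K in L, with Galois conjugate ασ
    (α ασ : L)
    (AA BB CC : K) (hAA : AA ≠ 0)
    (hαroot : ι AA * α ^ 2 + ι BB * α + ι CC = 0)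
    (hασroot : ι AA * ασ ^ 2 + ι BB * ασ + ι CC = 0)
    (hαirr : ∀ y : K, ι y ≠ α)
    (hne : ασ ≠ α) :
    ∃ mα : ℕ, ∀ m : ℕ, mα ≤ m →
      ((qv : ℝ) ^ (-(m : ℤ))) ∈ quadSpectrumG ι A (thetaPairsG ι Γ α ασ) := by
  
  have hQ : (1 : ℝ) < (qv : ℝ) := by exact_mod_cast hqv
  have hQ0 : (0 : ℝ) < (qv : ℝ) := by linarith
  have hAnn : ∀ x, 0 ≤ A x := by
    intro x
    by_cases hx : x = 0
    · rw [(hA0 x).2 hx]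
    · obtain ⟨n, hn⟩ := hAval x hx
      rw [hn]; positivity
  obtain ⟨B, hB⟩ : ∃ B : AbsoluteValue L ℝ, ∀ x, B x = A x :=
    ⟨{ toFun := A
       map_mul' := hAmul
       nonneg' := hAnn
       eq_zero' := hA0
       add_le' := fun x y => (hAna x y).trans
        (max_le (le_add_of_nonneg_right (hAnn y)) (le_add_of_nonneg_left (hAnn x))) },
      fun x => rfl⟩
  have hBA : A = fun x => B x := funext fun x => (hB x).symm
  subst hBA
  have hinj : Function.Injective ι := ι.injective
  obtain ⟨D, hD0, hDA, hDB, hDC⟩ := clear_den R hRfrac AA BB CC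
  have hD0' : ι D ≠ 0 := (map_ne_zero ι).2 hD0
  have hAA' : ι AA ≠ 0 := (map_ne_zero ι).2 hAA
  have v1 : ι AA * (α + ασ) = -ι BB := by
    apply mul_left_cancel₀ (sub_ne_zero.2 hne)
    linear_combination hασroot - hαroot
  have v2 : ι AA * (α * ασ) = ι CC := by
    linear_combination α * v1 - hαroot
  have hασirr : ∀ y : K, ι y ≠ ασ := by
    intro y hy
    apply hαirr (-BB / AA - y)
    rw [map_sub, map_div₀, map_neg, hy, ← v1, mul_div_cancel_left₀ _ hAA']
    ring
  have hirr : ∀ z : L, (∀ y : K, ι y ≠ z) → ∀ p ∈ R.map ι, ∀ q ∈ R.map ι, p + q * z = 0 → q = 0 := by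
    rintro z hz _ ⟨p, hp, rfl⟩ _ ⟨q, hq, rfl⟩ e
    by_contra hq0
    apply hz (-p / q)
    rw [map_div₀, map_neg, div_eq_iff hq0]
    linear_combination -e
  have hR' : ∀ x ∈ R.map ι, x ≠ 0 → 1 ≤ B x := by
    rintro _ ⟨x, hx, rfl⟩ h0
    exact hRint x hx ((map_ne_zero ι).1 h0)
  have hqd : QD B (R.map ι) (ι (AA * D)) (ι (BB * D)) (ι (CC * D)) α ασ :=
    { hna := hAna
      hR := hR'
      hAA := ⟨_, hDA, rfl⟩
      hBB := ⟨_, hDB, rfl⟩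
      hCC := ⟨_, hDC, rfl⟩
      hAA0 := (map_ne_zero ι).2 (mul_ne_zero hAA hD0)
      v1 := by rw [map_mul, map_mul]; linear_combination (ι D) * v1
      v2 := by rw [map_mul, map_mul]; linear_combination (ι D) * v2
      hne := hne.symm
      irr := hirr α hαirr
      irr' := hirr ασ hασirr }
  have hfrac : ∀ y : K, ∃ p ∈ R.map ι, ∃ q ∈ R.map ι, q ≠ 0 ∧ ι y = p / q := by
    intro y
    obtain ⟨p, q, hp, hq, hq0, e⟩ := hRfrac y
    have hq0' : ι q ≠ 0 := (map_ne_zero ι).2 hq0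
    refine ⟨ι p, ⟨p, hp, rfl⟩, ι q, ⟨q, hq, rfl⟩, hq0', ?_⟩
    rw [eq_div_iff hq0', ← map_mul, e]
  have hdense' : ∀ x : L, ∀ ε : ℝ, 0 < ε →
      ∃ p ∈ R.map ι, ∃ q ∈ R.map ι, q ≠ 0 ∧ B (x - p / q) < ε := by
    intro x ε hε
    obtain ⟨y, hy⟩ := hdense x ε hε
    obtain ⟨p, hp, q, hq, hq0, e⟩ := hfrac y
    exact ⟨p, hp, q, hq, hq0, by rw [← e]; exact hy⟩
  obtain ⟨X', ⟨X, hXR, rfl⟩, hX1⟩ := lat_big B hAna qv hQ hAsurj (R.map ι) hR' hdense'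
  have hdet : ∀ g ∈ G0, B (ι ((g : Matrix (Fin 2) (Fin 2) K) 0 0) * ι ((g : Matrix (Fin 2) (Fin 2) K) 1 1)
      - ι ((g : Matrix (Fin 2) (Fin 2) K) 0 1) * ι ((g : Matrix (Fin 2) (Fin 2) K) 1 0)) = 1 := by
    intro g hg
    obtain ⟨h1, h2⟩ := (hG0 g).1 hg
    have e1 : (g : Matrix (Fin 2) (Fin 2) K).det * ((g⁻¹ : GL (Fin 2) K) : Matrix (Fin 2) (Fin 2) K).det = 1 := by
      rw [← Matrix.det_mul, ← Units.val_mul, mul_inv_cancel, Units.val_one, Matrix.det_one]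
    have m1 : (g : Matrix (Fin 2) (Fin 2) K).det ∈ R := by
      rw [Matrix.det_fin_two]
      exact R.sub_mem (R.mul_mem (h1 _ _) (h1 _ _)) (R.mul_mem (h1 _ _) (h1 _ _))
    have m2 : ((g⁻¹ : GL (Fin 2) K) : Matrix (Fin 2) (Fin 2) K).det ∈ R := by
      rw [Matrix.det_fin_two]
      exact R.sub_mem (R.mul_mem (h2 _ _) (h2 _ _)) (R.mul_mem (h2 _ _) (h2 _ _))
    have i1 := hRint _ m1 (left_ne_zero_of_mul_eq_one e1)
    have i2 := hRint _ m2 (right_ne_zero_of_mul_eq_one e1)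
    have e2 : B (ι (g : Matrix (Fin 2) (Fin 2) K).det) *
        B (ι ((g⁻¹ : GL (Fin 2) K) : Matrix (Fin 2) (Fin 2) K).det) = 1 := by
      rw [← map_mul, ← map_mul, e1, map_one, map_one]
    rw [← map_mul, ← map_mul, ← map_sub, ← Matrix.det_fin_two]
    simp only at i1 i2
    nlinarith
  have hpair : ∀ g ∈ G0, ∀ z w : L, (∀ y : K, ι y ≠ z) → (∀ y : K, ι y ≠ w) →
      PairOf B (R.map ι) z w (homog ι g z) (homog ι g w) := by
    intro g hg z w hz hw
    obtain ⟨h1, h2⟩ := (hG0 g).1 hg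
    exact ⟨_, ⟨_, h1 0 0, rfl⟩, _, ⟨_, h1 0 1, rfl⟩, _, ⟨_, h1 1 0, rfl⟩, _, ⟨_, h1 1 1, rfl⟩,
      hdet g hg, div_mul_cancel₀ _ (den_ne ι hz g), div_mul_cancel₀ _ (den_ne ι hw g)⟩
  obtain ⟨m0, hm0⟩ := hall_abstract hqd (qv : ℝ) hQ hcomplete hAval hAsurj
    (by obtain ⟨s, _, hs⟩ := hres; exact ⟨s, hs⟩) hdense'
    (fun b b' => (b, b') ∈ thetaPairsG ι Γ α ασ)
    (by
      rintro b b' ⟨g, hg, e | e⟩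
      · obtain ⟨rfl, rfl⟩ := Prod.mk.inj e
        exact Or.inl (hpair g (hΓG0 hg) _ _ hαirr hασirr)
      · obtain ⟨rfl, rfl⟩ := Prod.mk.inj e
        exact Or.inr (hpair g (hΓG0 hg) _ _ hασirr hαirr))
    (by
      rintro b b' ⟨g, hg, e | e⟩
      · obtain ⟨rfl, rfl⟩ := Prod.mk.inj e
        exact ⟨g, hg, Or.inr rfl⟩
      · obtain ⟨rfl, rfl⟩ := Prod.mk.inj e
        exact ⟨g, hg, Or.inl rfl⟩)
    ⟨1, Γ.one_mem, Or.inl (by rw [homog_one, homog_one])⟩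
    (by
      rintro _ ⟨p, hp, rfl⟩ _ ⟨q, hq, rfl⟩ N
      obtain ⟨n0, hn0⟩ := pow_unbounded_of_one_lt N hX1
      have hG : ∀ τ ∈ R, ugl p q τ ∈ G0 := by
        intro τ hτ
        refine (hG0 _).2 ⟨ugl_mem R hp hq hτ, ?_⟩
        rw [ugl_inv]
        exact ugl_mem R hp hq (R.neg_mem hτ)
      have : Finite (G0 ⧸ Γ.subgroupOf G0) :=
        @Finite.of_fintype _ (Subgroup.fintypeOfIndexNeZero hindex)
      obtain ⟨i, j, hij, hf⟩ := Finite.exists_ne_map_eq_of_infinite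
        (fun n : ℕ => (QuotientGroup.mk ⟨ugl p q (X ^ (n0 + n)), hG _ (R.pow_mem hXR _)⟩ :
          G0 ⧸ Γ.subgroupOf G0))
      have hmem := QuotientGroup.eq.1 hf
      rw [Subgroup.mem_subgroupOf] at hmem
      have hmem' : (ugl p q (X ^ (n0 + i)))⁻¹ * ugl p q (X ^ (n0 + j)) ∈ Γ := hmem
      rw [ugl_inv, ugl_mul] at hmem'
      set τ := -X ^ (n0 + i) + X ^ (n0 + j) with hτ
      have hτR : τ ∈ R := R.add_mem (R.neg_mem (R.pow_mem hXR _)) (R.pow_mem hXR _)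
      refine ⟨ι τ, ⟨τ, hτR, rfl⟩, ?_, ?_⟩
      · have e : ι τ = ι X ^ (n0 + j) - ι X ^ (n0 + i) := by
          rw [hτ, map_add, map_neg, map_pow, map_pow]; ring
        rw [e]
        rcases lt_or_gt_of_ne hij with hlt | hlt
        · have : B (ι X ^ (n0 + i)) < B (ι X ^ (n0 + j)) := by
            rw [map_pow, map_pow]; exact pow_lt_pow_right₀ hX1 (by omega)
          rw [na_sub_l B hAna this, map_pow]
          exact hn0.trans_le (pow_le_pow_right₀ hX1.le (by omega))
        · have : B (ι X ^ (n0 + j)) < B (ι X ^ (n0 + i)) := by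
            rw [map_pow, map_pow]; exact pow_lt_pow_right₀ hX1 (by omega)
          rw [na_sub_r B hAna this, map_pow]
          exact hn0.trans_le (pow_le_pow_right₀ hX1.le (by omega))
      · have hact : ∀ u ∈ Γ, ∀ b b', (b, b') ∈ thetaPairsG ι Γ α ασ →
            (homog ι u b, homog ι u b') ∈ thetaPairsG ι Γ α ασ := by
          rintro u hu b b' ⟨g, hg, e | e⟩
          · obtain ⟨rfl, rfl⟩ := Prod.mk.inj e
            exact ⟨u * g, Γ.mul_mem hu hg, Or.inl (by
              rw [homog_mul ι hαirr, homog_mul ι hασirr])⟩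
          · obtain ⟨rfl, rfl⟩ := Prod.mk.inj e
            exact ⟨u * g, Γ.mul_mem hu hg, Or.inr (by
              rw [homog_mul ι hαirr, homog_mul ι hασirr])⟩
        intro b b' hb
        have a1 := hact _ hmem' b b' hb
        have a2 := hact _ (Γ.inv_mem hmem') b b' hb
        rw [ugl_inv, homog_ugl, homog_ugl, map_neg] at a2
        rw [homog_ugl, homog_ugl] at a1
        exact ⟨a1, a2⟩)
  refine ⟨m0, fun m hm => ?_⟩
  obtain ⟨x, hx1, hx2, hx3, hx4, hx5⟩ := hm0 m hm
  have hMp : (0 : ℝ) < (qv : ℝ) ^ m := by positivity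
  refine ⟨x, ?_, ?_, ?_⟩
  · intro y hy
    obtain ⟨p, hp, q, hq, hq0, e⟩ := hfrac y
    exact hx1 p hp q hq hq0 (by rw [← e, hy])
  · rintro ⟨b, b'⟩ hb
    exact hx2 b b' hb
  · rw [zpow_neg, zpow_natCast]
    apply capprox_eq
    · rintro ⟨b, b'⟩ hb
      have hpos : 0 < B (b - b') := B.pos (sub_ne_zero.2 (hx3 b b' hb))
      have := hx4 b b' hb
      rw [le_div_iff₀ hpos, inv_mul_le_iff₀ hMp]
      exact this
    · exact fun z => B.nonneg z
    · intro ε hε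
      obtain ⟨b, b', hb, h1, h2⟩ := hx5 ε hε
      have hpos : 0 < B (b - b') := B.pos (sub_ne_zero.2 (hx3 b b' hb))
      refine ⟨(b, b'), hb, h1, ?_⟩
      rw [div_eq_iff hpos.ne', h2, inv_mul_cancel_left₀ hMp.ne']
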